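/- arXiv:1212.6451 — 4 statements merged into one kernel-verified Lean document; each statement's English description precedes it below -/
import Mathlib

section
/- Let Ψ : (0,∞) → ℝ be a critical or subcritical branching mechanism, i.e. Ψ(u) = αu + βu² + ∫_{(0,∞)} (e^{−ux} − 1 + ux) π(dx) with α ≥ 0, β ≥ 0 and π a Borel measure on (0,∞) satisfying ∫_{(0,∞)} min(x, x²) π(dx) < ∞, and assume (α, β, π) ≠ (0,0,0) (so that Ψ is strictly positive and strictly increasing on (0,∞)). Then the inverse function Ψ⁻¹, defined on the interval (0, S) where S = lim_{u→∞} Ψ(u) ∈ (0,∞], is a Bernstein function: it is infinitely differentiable, nonnegative, and satisfies (−1)^k (Ψ⁻¹)^{(k+1)} ≥ 0 on (0, S) for every integer k ≥ 0. -/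
open MeasureTheory Set Filter

noncomputable section

/-- Completely monotone up to order `n` on the positive half line. -/
def CMn : ℕ → (ℝ → ℝ) → Prop
  | 0, F => ∀ u : ℝ, 0 < u → 0 ≤ F u
  | (n+1), F => (∀ u : ℝ, 0 < u → 0 ≤ F u) ∧
      ∃ G : ℝ → ℝ, (∀ u : ℝ, 0 < u → HasDerivAt F (-G u) u) ∧ CMn n G

lemma CMn.nonneg {n : ℕ} {F : ℝ → ℝ} (h : CMn n F) : ∀ u : ℝ, 0 < u → 0 ≤ F u := by
  cases n with
  | zero => exact h
  | succ n => exact h.1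

lemma CMn.pred {n : ℕ} : ∀ {F : ℝ → ℝ}, CMn (n+1) F → CMn n F := by
  induction n with
  | zero => intro F h; exact h.1
  | succ n ih =>
    intro F h
    obtain ⟨h0, G, hG, hc⟩ := h
    exact ⟨h0, G, hG, ih hc⟩

lemma CMn.add {n : ℕ} : ∀ {F G : ℝ → ℝ}, CMn n F → CMn n G → CMn n (fun u => F u + G u) := by
  induction n with
  | zero => intro F G h1 h2 u hu; exact add_nonneg (h1 u hu) (h2 u hu)
  | succ n ih =>
    intro F G h1 h2
    obtain ⟨h0, F', hF, hc⟩ := h1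
    obtain ⟨k0, G', hG, kc⟩ := h2
    refine ⟨fun u hu => add_nonneg (h0 u hu) (k0 u hu), _, fun u hu => ?_, ih hc kc⟩
    refine ((hF u hu).add (hG u hu)).congr_deriv ?_
    ring

lemma CMn.mul {n : ℕ} : ∀ {F G : ℝ → ℝ}, CMn n F → CMn n G → CMn n (fun u => F u * G u) := by
  induction n with
  | zero => intro F G h1 h2 u hu; exact mul_nonneg (h1 u hu) (h2 u hu)
  | succ n ih =>
    intro F G h1 h2
    have h1p := h1.pred
    have h2p := h2.pred
    obtain ⟨h0, F', hF, hc⟩ := h1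
    obtain ⟨k0, G', hG, kc⟩ := h2
    refine ⟨fun u hu => mul_nonneg (h0 u hu) (k0 u hu), _, fun u hu => ?_,
      (ih hc h2p).add (ih h1p kc)⟩
    refine ((hF u hu).mul (hG u hu)).congr_deriv ?_
    ring

lemma CMn.inv_of {B B' : ℝ → ℝ} (hB : ∀ u, 0 < u → 0 < B u)
    (hd : ∀ u, 0 < u → HasDerivAt B (B' u) u) (hc : ∀ n, CMn n B') (n : ℕ) :
    CMn n (fun u => (B u)⁻¹) := by
  induction n with
  | zero => intro u hu; exact (inv_pos.2 (hB u hu)).le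
  | succ n ih =>
    refine ⟨fun u hu => (inv_pos.2 (hB u hu)).le, _, fun u hu => ?_, (hc n).mul (ih.mul ih)⟩
    refine ((hd u hu).inv (hB u hu).ne').congr_deriv ?_
    have := (hB u hu).ne'
    field_simp

lemma comp_main {g φ : ℝ → ℝ} {U : Set ℝ} (hU : IsOpen U) (hpos : ∀ y ∈ U, 0 < g y)
    (hgd : ∀ y ∈ U, HasDerivAt g (φ (g y)) y) (hφ : ∀ n, CMn n φ) (n : ℕ) :
    ∀ F : ℝ → ℝ, CMn n F → (∀ y ∈ U, 0 ≤ (-1 : ℝ) ^ n * iteratedDeriv n (fun y => F (g y)) y) := by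
  induction n with
  | zero => intro F hF y hy; simpa using hF _ (hpos y hy)
  | succ n ih =>
    intro F hF y hy
    obtain ⟨h0, G, hG, hc⟩ := hF
    have h1 := ih _ (hc.mul (hφ n)) y hy
    have he : deriv (fun y => F (g y)) =ᶠ[nhds y] fun y => -(G (g y) * φ (g y)) := by
      filter_upwards [hU.mem_nhds hy] with z hz
      have := ((hG _ (hpos z hz)).comp z (hgd z hz)).deriv
      rw [show (fun y => F (g y)) = F ∘ g from rfl, this]; ring
    rw [iteratedDeriv_succ', he.iteratedDeriv_eq]
    rw [iteratedDeriv_fun_neg, pow_succ]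
    linarith

lemma comp_smooth {g φ : ℝ → ℝ} {U : Set ℝ} (hU : IsOpen U) (hpos : ∀ y ∈ U, 0 < g y)
    (hgd : ∀ y ∈ U, HasDerivAt g (φ (g y)) y) (hφ : ∀ n, CMn n φ) (n : ℕ) :
    ∀ F : ℝ → ℝ, CMn (n+1) F → ContDiffOn ℝ n (fun y => F (g y)) U := by
  induction n with
  | zero =>
    intro F hF
    obtain ⟨h0, G, hG, hc⟩ := hF
    refine contDiffOn_zero.2 fun z hz => ?_
    exact (((hG _ (hpos z hz)).comp z (hgd z hz)).continuousAt).continuousWithinAt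
  | succ n ih =>
    intro F hF
    obtain ⟨h0, G, hG, hc⟩ := hF
    have hd : ∀ z ∈ U, HasDerivAt (fun y => F (g y)) (-(G (g z) * φ (g z))) z := by
      intro z hz
      refine (((hG _ (hpos z hz)).comp z (hgd z hz))).congr_deriv ?_
      ring
    push_cast
    rw [contDiffOn_succ_iff_deriv_of_isOpen hU]
    refine ⟨fun z hz => (hd z hz).differentiableAt.differentiableWithinAt, by simp, ?_⟩
    exact (ih _ (hc.mul (hφ _))).neg.congr fun z hz => (hd z hz).deriv

lemma final_main {Ψ B B' g : ℝ → ℝ} (hB : ∀ u, 0 < u → 0 < B u)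
    (hd0 : ∀ u, 0 < u → HasDerivAt Ψ (B u) u)
    (hd : ∀ u, 0 < u → HasDerivAt B (B' u) u) (hc : ∀ n, CMn n B')
    (hg : ∀ u : ℝ, 0 < u → g (Ψ u) = u) :
    ∀ y ∈ Ψ '' Ioi (0:ℝ),
      (∀ n : ℕ, ContDiffAt ℝ n g y) ∧ 0 ≤ g y ∧
      ∀ k : ℕ, 0 ≤ (-1 : ℝ) ^ k * iteratedDeriv (k + 1) g y := by
  have hs : ∀ u, 0 < u → HasStrictDerivAt Ψ (B u) u := fun u hu =>
    hasStrictDerivAt_of_hasDerivAt_of_continuousAt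
      (by filter_upwards [Ioi_mem_nhds hu] with v hv using hd0 v hv) (hd u hu).continuousAt
  have hU : IsOpen (Ψ '' Ioi (0:ℝ)) := by
    rw [isOpen_iff_mem_nhds]
    rintro _ ⟨u, hu, rfl⟩
    rw [← (hs u hu).map_nhds_eq (hB u hu).ne']
    exact image_mem_map (Ioi_mem_nhds hu)
  have hpos : ∀ y ∈ Ψ '' Ioi (0:ℝ), 0 < g y := by
    rintro _ ⟨u, hu, rfl⟩
    rw [hg u hu]; exact hu
  have hgd : ∀ y ∈ Ψ '' Ioi (0:ℝ), HasDerivAt g ((fun u => (B u)⁻¹) (g y)) y := by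
    rintro _ ⟨u, hu, rfl⟩
    have := ((hs u hu).to_local_left_inverse (g := g) (hB u hu).ne'
      (by filter_upwards [Ioi_mem_nhds hu] with v hv using hg v hv)).hasDerivAt
    simpa [hg u hu] using this
  have hφ := CMn.inv_of hB hd hc
  intro y hy
  have he : deriv g =ᶠ[nhds y] fun y => (B (g y))⁻¹ := by
    filter_upwards [hU.mem_nhds hy] with z hz using (hgd z hz).deriv
  refine ⟨fun n => ?_, (hpos y hy).le, fun k => ?_⟩
  · have : ContDiffOn ℝ (n+1 : ℕ) g (Ψ '' Ioi (0:ℝ)) := by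
      push_cast
      rw [contDiffOn_succ_iff_deriv_of_isOpen hU]
      refine ⟨fun z hz => (hgd z hz).differentiableAt.differentiableWithinAt, by simp, ?_⟩
      exact (comp_smooth hU hpos hgd hφ n _ (hφ _)).congr fun z hz => (hgd z hz).deriv
    exact (this.contDiffAt (hU.mem_nhds hy)).of_le (by norm_cast; omega)
  · rw [iteratedDeriv_succ', he.iteratedDeriv_eq]
    exact comp_main hU hpos hgd hφ k _ (hφ k) y hy

lemma pow_exp_bound (n : ℕ) {e : ℝ} (he : 0 < e) : ∃ C : ℝ, ∀ x : ℝ, 0 < x →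
    ∀ u, e < u → x ^ (n+2) * Real.exp (-(u * x)) ≤ C * min x (x^2) := by
  have key : ∀ m : ℕ, ∀ x : ℝ, 0 < x → ∀ u, e < u →
      x ^ m * Real.exp (-(u*x)) ≤ m.factorial / e ^ m := by
    intro m x hx u hu
    have h1 := Real.pow_div_factorial_le_exp (e*x) (by positivity) m
    have h2 : Real.exp (-(u*x)) ≤ Real.exp (-(e*x)) :=
      Real.exp_le_exp.2 (by nlinarith)
    have h3 : Real.exp (-(e*x)) * Real.exp (e*x) = 1 := by rw [← Real.exp_add]; simp
    rw [div_le_iff₀ (by positivity)] at h1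
    rw [le_div_iff₀ (by positivity)]
    calc x ^ m * Real.exp (-(u*x)) * e^m ≤ x ^ m * Real.exp (-(e*x)) * e^m := by gcongr
      _ = (e*x)^m * Real.exp (-(e*x)) := by ring
      _ ≤ (Real.exp (e*x) * m.factorial) * Real.exp (-(e*x)) := by gcongr
      _ = m.factorial := by rw [mul_right_comm, mul_comm (Real.exp _), h3, one_mul]
  refine ⟨max ((n+1).factorial / e^(n+1)) (n.factorial / e^n), fun x hx u hu => ?_⟩
  rcases min_choice x (x^2) with h | h <;> rw [h]
  · calc x ^ (n+2) * Real.exp (-(u * x)) = (x^(n+1) * Real.exp (-(u*x))) * x := by ring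
      _ ≤ _ := by gcongr; exact (key _ x hx u hu).trans (le_max_left _ _)
  · calc x ^ (n+2) * Real.exp (-(u * x)) = (x^n * Real.exp (-(u*x))) * x^2 := by ring
      _ ≤ _ := by gcongr; exact (key _ x hx u hu).trans (le_max_right _ _)

section meas
variable {ν : Measure ℝ}

lemma gen_int (hm : Integrable (fun x : ℝ => min x (x^2)) ν) (hp : ∀ᵐ x ∂ν, 0 < x)
    {F : ℝ → ℝ} (hF : Continuous F) (C : ℝ)
    (h : ∀ x, 0 < x → |F x| ≤ C * min x (x^2)) : Integrable F ν := by
  refine (hm.const_mul C).mono' hF.aestronglyMeasurable ?_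
  filter_upwards [hp] with x hx using h x hx

lemma gen_deriv (hm : Integrable (fun x : ℝ => min x (x^2)) ν) (hp : ∀ᵐ x ∂ν, 0 < x)
    {F F' : ℝ → ℝ → ℝ} (hF : ∀ u, Continuous (F u)) (hF' : ∀ u, Continuous (F' u))
    {u : ℝ} (hu : 0 < u) (hi : Integrable (F u) ν)
    (hd : ∀ v x, HasDerivAt (fun v => F v x) (F' v x) v) (C : ℝ)
    (h : ∀ x, 0 < x → ∀ v, u/2 < v → v < 2*u → |F' v x| ≤ C * min x (x^2)) :
    HasDerivAt (fun v => ∫ x, F v x ∂ν) (∫ x, F' u x ∂ν) u := by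
  refine (hasDerivAt_integral_of_dominated_loc_of_deriv_le (s := Ioo (u/2) (2*u))
    (bound := fun x => C * min x (x^2)) (Ioo_mem_nhds (by linarith) (by linarith)) ?_ hi
    (hF' u).aestronglyMeasurable ?_ (hm.const_mul C) ?_).2
  · exact Eventually.of_forall fun v => (hF v).aestronglyMeasurable
  · filter_upwards [hp] with x hx v hv using h x hx v hv.1 hv.2
  · exact Eventually.of_forall fun x v _ => hd v x

lemma exp_deriv (v x : ℝ) :
    HasDerivAt (fun v => Real.exp (-(v*x))) (-(x * Real.exp (-(v*x)))) v := by
  refine ((((hasDerivAt_id v).mul_const x).neg).exp).congr_deriv ?_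
  simp [mul_comm]

lemma K_int (hm : Integrable (fun x : ℝ => min x (x^2)) ν) (hp : ∀ᵐ x ∂ν, 0 < x) (n : ℕ)
    {u : ℝ} (hu : 0 < u) : Integrable (fun x => x ^ (n+2) * Real.exp (-(u*x))) ν := by
  obtain ⟨C, hC⟩ := pow_exp_bound n (half_pos hu)
  refine gen_int hm hp (by fun_prop) C fun x hx => ?_
  rw [abs_of_nonneg (by positivity)]
  exact hC x hx u (by linarith)

lemma K_deriv (hm : Integrable (fun x : ℝ => min x (x^2)) ν) (hp : ∀ᵐ x ∂ν, 0 < x) (n : ℕ)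
    {u : ℝ} (hu : 0 < u) : HasDerivAt (fun u => ∫ x, x ^ (n+2) * Real.exp (-(u*x)) ∂ν)
      (-∫ x, x ^ (n+1+2) * Real.exp (-(u*x)) ∂ν) u := by
  obtain ⟨C, hC⟩ := pow_exp_bound (n+1) (half_pos hu)
  rw [← integral_neg]
  refine gen_deriv (F := fun u x => x ^ (n+2) * Real.exp (-(u*x)))
    (F' := fun u x => -(x ^ (n+1+2) * Real.exp (-(u*x)))) hm hp (fun u => by fun_prop)
    (fun u => by fun_prop) hu (K_int hm hp n hu) (fun v x => ?_) C fun x hx v hv _ => ?_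
  · refine ((exp_deriv v x).const_mul (x^(n+2))).congr_deriv ?_
    ring
  · rw [abs_neg, abs_of_nonneg (by positivity)]
    exact hC x hx v hv

lemma K_cm (hm : Integrable (fun x : ℝ => min x (x^2)) ν) (hp : ∀ᵐ x ∂ν, 0 < x) (k : ℕ) :
    ∀ n : ℕ, CMn k (fun u => ∫ x, x ^ (n+2) * Real.exp (-(u*x)) ∂ν) := by
  have h0 : ∀ n : ℕ, ∀ u : ℝ, 0 < u → 0 ≤ ∫ x, x ^ (n+2) * Real.exp (-(u*x)) ∂ν := by
    intro n u hu
    refine integral_nonneg_of_ae ?_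
    filter_upwards [hp] with x hx
    simp only [Pi.zero_apply]
    positivity
  induction k with
  | zero => intro n; exact h0 n
  | succ k ih => intro n; exact ⟨h0 n, _, fun u hu => K_deriv hm hp n hu, ih (n+1)⟩

lemma one_sub_exp_bound {x v M : ℝ} (hx : 0 < x) (hv : 0 < v) (hM : v < M) :
    |x * (1 - Real.exp (-(v*x)))| ≤ max 1 M * min x (x^2) := by
  have h1 : Real.exp (-(v*x)) ≤ 1 := Real.exp_le_one_iff.2 (by nlinarith)
  have h2 := Real.exp_pos (-(v*x))
  have h3 := Real.add_one_le_exp (-(v*x))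
  rw [abs_of_nonneg (mul_nonneg hx.le (by linarith))]
  rcases min_choice x (x^2) with h | h <;> rw [h]
  · rw [mul_comm]; gcongr; exact le_trans (by linarith) (le_max_left _ _)
  · calc x * (1 - Real.exp (-(v*x))) ≤ x * (v*x) := by gcongr; linarith
      _ = v * x^2 := by ring
      _ ≤ _ := by gcongr; exact hM.le.trans (le_max_right _ _)

lemma B_int (hm : Integrable (fun x : ℝ => min x (x^2)) ν) (hp : ∀ᵐ x ∂ν, 0 < x)
    {u : ℝ} (hu : 0 < u) : Integrable (fun x => x * (1 - Real.exp (-(u*x)))) ν :=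
  gen_int hm hp (by fun_prop) _ fun _ hx => one_sub_exp_bound hx hu (lt_add_one u)

lemma B_deriv (hm : Integrable (fun x : ℝ => min x (x^2)) ν) (hp : ∀ᵐ x ∂ν, 0 < x)
    {u : ℝ} (hu : 0 < u) : HasDerivAt (fun u => ∫ x, x * (1 - Real.exp (-(u*x))) ∂ν)
      (∫ x, x ^ (0+2) * Real.exp (-(u*x)) ∂ν) u := by
  obtain ⟨C, hC⟩ := pow_exp_bound 0 (half_pos hu)
  refine gen_deriv (F := fun u x => x * (1 - Real.exp (-(u*x))))
    (F' := fun u x => (x ^ (0+2) * Real.exp (-(u*x)))) hm hp (fun u => by fun_prop)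
    (fun u => by fun_prop) hu (B_int hm hp hu) (fun v x => ?_) C fun x hx v hv _ => ?_
  · refine (((exp_deriv v x).const_sub 1).const_mul x).congr_deriv ?_
    ring
  · rw [abs_of_nonneg (by positivity)]
    exact hC x hx v hv

lemma Psi_int (hm : Integrable (fun x : ℝ => min x (x^2)) ν) (hp : ∀ᵐ x ∂ν, 0 < x)
    {u : ℝ} (hu : 0 < u) : Integrable (fun x => Real.exp (-(u*x)) - 1 + u*x) ν := by
  refine gen_int hm hp (by fun_prop) (max u (u^2)) fun x hx => ?_
  have h1 : Real.exp (-(u*x)) ≤ 1 := Real.exp_le_one_iff.2 (by nlinarith)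
  have h3 := Real.add_one_le_exp (-(u*x))
  have h4 := Real.add_one_le_exp (u*x)
  have h5 : Real.exp (-(u*x)) * Real.exp (u*x) = 1 := by rw [← Real.exp_add]; simp
  have h2 := Real.exp_pos (-(u*x))
  have h6 : Real.exp (-(u*x)) - 1 + u*x ≤ (u*x)^2 := by
    have hux : 0 < u*x := by positivity
    generalize u*x = t at *
    have : Real.exp (-t) * (t+1) ≤ 1 := by nlinarith
    have : Real.exp (-t) * (t+1) ≤ (1 - t + t^2) * (t+1) := by nlinarith [pow_pos hux 3]
    have := le_of_mul_le_mul_right this (by linarith)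
    linarith
  rw [abs_of_nonneg (by linarith)]
  rcases min_choice x (x^2) with h | h <;> rw [h]
  · calc _ ≤ u * x := by linarith
      _ ≤ _ := by gcongr; exact le_max_left _ _
  · calc _ ≤ u^2 * x^2 := by linarith [mul_pow u x 2]
      _ ≤ _ := by gcongr; exact le_max_right _ _

lemma Psi_deriv (hm : Integrable (fun x : ℝ => min x (x^2)) ν) (hp : ∀ᵐ x ∂ν, 0 < x)
    {u : ℝ} (hu : 0 < u) : HasDerivAt (fun u => ∫ x, (Real.exp (-(u*x)) - 1 + u*x) ∂ν)
      (∫ x, x * (1 - Real.exp (-(u*x))) ∂ν) u := by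
  refine gen_deriv (F := fun u x => Real.exp (-(u*x)) - 1 + u*x)
    (F' := fun u x => x * (1 - Real.exp (-(u*x)))) hm hp (fun u => by fun_prop)
    (fun u => by fun_prop) hu (Psi_int hm hp hu) (fun v x => ?_) _
    fun x hx v hv hv2 => one_sub_exp_bound hx (by linarith) hv2
  refine (((exp_deriv v x).sub_const 1).add ((hasDerivAt_id v).mul_const x)).congr_deriv ?_
  ring

end meas

/-- The inverse of a critical or subcritical branching mechanism
(with nondegenerate characteristics) is a Bernstein function on the image
interval `(0, S) = Ψ '' (0,∞)`. -/
theorem inverse_of_branching_mechanism_is_Bernstein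
    (Ψ : ℝ → ℝ) (α β : ℝ) (π : Measure ℝ)
    (hα : 0 ≤ α) (hβ : 0 ≤ β)
    (hπfin : ∫⁻ x in Ioi (0:ℝ), ENNReal.ofReal (min x (x ^ 2)) ∂π < ⊤)
    (hΨ : ∀ u : ℝ, 0 < u →
      Ψ u = α * u + β * u ^ 2 + ∫ x in Ioi (0:ℝ), (Real.exp (-(u * x)) - 1 + u * x) ∂π)
    (hnz : ¬ (α = 0 ∧ β = 0 ∧ π (Ioi (0:ℝ)) = 0))
    (g : ℝ → ℝ) (hg : ∀ u : ℝ, 0 < u → g (Ψ u) = u) :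
    ∀ y ∈ Ψ '' Ioi (0:ℝ),
      (∀ n : ℕ, ContDiffAt ℝ n g y) ∧ 0 ≤ g y ∧
      ∀ k : ℕ, 0 ≤ (-1 : ℝ) ^ k * iteratedDeriv (k + 1) g y := by
  set ν := π.restrict (Ioi (0:ℝ)) with hν
  have hp : ∀ᵐ x ∂ν, 0 < x := ae_restrict_mem measurableSet_Ioi
  have hm : Integrable (fun x : ℝ => min x (x^2)) ν := by
    refine ⟨(by fun_prop : Continuous fun x : ℝ => min x (x^2)).aestronglyMeasurable, ?_⟩
    rw [hasFiniteIntegral_iff_ofReal]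
    · exact hπfin
    · filter_upwards [hp] with x hx
      simp only [Pi.zero_apply]
      positivity
  have hin : ∀ x u : ℝ, 0 < x → 0 < u → 0 < x * (1 - Real.exp (-(u*x))) := fun x u hx hu => by
    have : Real.exp (-(u*x)) < 1 := by rw [Real.exp_lt_one_iff]; nlinarith [mul_pos hu hx]
    exact mul_pos hx (by linarith)
  have hB0 : ∀ u, 0 < u → 0 ≤ ∫ x, x * (1 - Real.exp (-(u*x))) ∂ν := fun u hu => by
    refine integral_nonneg_of_ae ?_
    filter_upwards [hp] with x hx using (hin x u hx hu).le
  refine final_main (Ψ := Ψ)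
    (B := fun u => α + 2 * β * u + ∫ x, x * (1 - Real.exp (-(u*x))) ∂ν)
    (B' := fun u => 2 * β + ∫ x, x ^ (0+2) * Real.exp (-(u*x)) ∂ν) ?_ ?_ ?_ ?_ hg
  · intro u hu
    have h0 := hB0 u hu
    have hbu : 0 ≤ 2 * β * u := by positivity
    show 0 < α + 2 * β * u + ∫ x, x * (1 - Real.exp (-(u*x))) ∂ν
    rcases hα.lt_or_eq with h | h
    · linarith
    rcases hβ.lt_or_eq with h' | h'
    · have : 0 < 2 * β * u := by positivity
      linarith
    have hne : π (Ioi 0) ≠ 0 := fun h3 => hnz ⟨h.symm, h'.symm, h3⟩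
    have : 0 < ∫ x, x * (1 - Real.exp (-(u*x))) ∂ν := by
      refine lt_of_le_of_ne h0 fun h4 => hne ?_
      have h5 := (integral_eq_zero_iff_of_nonneg_ae (by
        filter_upwards [hp] with x hx using (hin x u hx hu).le) (B_int hm hp hu)).1 h4.symm
      have h6 : ∀ᵐ x ∂ν, False := by
        filter_upwards [hp, h5] with x hx h7
        exact (hin x u hx hu).ne' h7
      have h8 : ν = 0 := by simpa using h6
      rw [hν] at h8
      exact Measure.restrict_eq_zero.1 h8
    linarith
  · intro u hu
    have h1 := (((hasDerivAt_id u).const_mul α).add (((hasDerivAt_id u).pow 2).const_mul β)).add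
      (Psi_deriv hm hp hu)
    have h2 := h1.congr_of_eventuallyEq (f₁ := Ψ) (by
      filter_upwards [Ioi_mem_nhds hu] with v hv
      simpa using hΨ v hv)
    refine h2.congr_deriv ?_
    simp; ring
  · intro u hu
    have h1 := (((hasDerivAt_id u).const_mul (2 * β)).const_add α).add (B_deriv hm hp hu)
    refine h1.congr_deriv ?_
    simp
  · intro n
    cases n with
    | zero => exact fun u hu => add_nonneg (by positivity) ((K_cm hm hp 0 0).nonneg u hu)
    | succ n =>
      exact ⟨fun u hu => add_nonneg (by positivity) ((K_cm hm hp 0 0).nonneg u hu), _,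
        fun u hu => (K_deriv hm hp 0 hu).const_add (2*β), K_cm hm hp n 1⟩
end
end

section
/- Let Ψ(u) = αu + βu² + ∫_{(0,∞)} (e^{−ux} − 1 + ux) π(dx) be a branching mechanism (α ∈ ℝ, β ≥ 0, ∫_{(0,∞)} min(x, x²) π(dx) < ∞), and let Φ be the unique solution of the initial value problem ∂_t Φ(t,q) = −Ψ(Φ(t,q)) for t > 0, q ∈ (0,∞), with Φ(0,q) = q. Then for each fixed t ≥ 0, the map q ↦ Φ(t,q) is a Bernstein function on (0,∞): it is infinitely differentiable, nonnegative, and (−1)^k ∂_q^{k+1} Φ(t,q) ≥ 0 for all q > 0 and all integers k ≥ 0. Moreover Φ(t, 0⁺) = 0 and 0 ≤ Φ(t,q) ≤ q e^{−αt} for all t ≥ 0, q > 0. -/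
open MeasureTheory Set Filter

noncomputable section

def BQ : Set (ℝ × ℝ) := Ici (0:ℝ) ×ˢ Ioi (0:ℝ)

theorem bf_prim {h : ℝ → ℝ → ℝ} (hc : ContinuousOn (fun p : ℝ × ℝ => h p.1 p.2) BQ) :
    ContinuousOn (fun p : ℝ × ℝ => ∫ s in (0:ℝ)..p.1, h s p.2) BQ := by
  have h1 : Continuous (fun p : ℝ × ℝ => h (max p.2 0) (Real.exp p.1)) := by
    have : Continuous (fun p : ℝ × ℝ => ((max p.2 0, Real.exp p.1) : ℝ × ℝ)) := by fun_prop
    exact hc.comp_continuous this (fun p => ⟨le_max_right p.2 0, Real.exp_pos p.1⟩)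
  have h2 := intervalIntegral.continuous_parametric_primitive_of_continuous (μ := volume)
    (f := fun y s : ℝ => h (max s 0) (Real.exp y)) (a₀ := 0) h1
  have h3 : ContinuousOn (fun p : ℝ × ℝ => ((Real.log p.2, p.1) : ℝ × ℝ)) BQ := by
    refine ContinuousOn.prodMk ?_ continuousOn_fst
    exact ContinuousOn.log continuousOn_snd (fun p hp => (mem_Ioi.1 hp.2).ne')
  refine (h2.comp_continuousOn h3).congr ?_
  rintro ⟨t, q⟩ ⟨ht, hq⟩
  simp only [mem_Ici, mem_Ioi] at ht hq
  refine intervalIntegral.integral_congr ?_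
  intro s hs
  rw [uIcc_of_le ht] at hs
  simp only [Real.exp_log hq, max_eq_left hs.1]

theorem bf_slice_s {h : ℝ → ℝ → ℝ} (hc : ContinuousOn (fun p : ℝ × ℝ => h p.1 p.2) BQ)
    {q : ℝ} (hq : 0 < q) : ContinuousOn (fun s => h s q) (Ici 0) :=
  ContinuousOn.comp hc (f := fun s : ℝ => ((s, q) : ℝ × ℝ)) (by fun_prop) (fun s hs => ⟨hs, hq⟩)

theorem bf_slice_q {h : ℝ → ℝ → ℝ} (hc : ContinuousOn (fun p : ℝ × ℝ => h p.1 p.2) BQ)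
    {s : ℝ} (hs : 0 ≤ s) : ContinuousOn (fun q => h s q) (Ioi 0) :=
  ContinuousOn.comp hc (f := fun q : ℝ => ((s, q) : ℝ × ℝ)) (by fun_prop) (fun q hq => ⟨hs, hq⟩)

theorem bf_ii {m : ℝ → ℝ} (hm : ContinuousOn m (Ici 0)) {t : ℝ} (ht : 0 ≤ t) :
    IntervalIntegrable m volume 0 t := by
  apply ContinuousOn.intervalIntegrable
  rw [uIcc_of_le ht]
  exact hm.mono Icc_subset_Ici_self

theorem bf_deriv_int {h h' : ℝ → ℝ → ℝ} (hc : ContinuousOn (fun p : ℝ × ℝ => h p.1 p.2) BQ)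
    (hc' : ContinuousOn (fun p : ℝ × ℝ => h' p.1 p.2) BQ)
    (hd : ∀ s, 0 ≤ s → ∀ q, 0 < q → HasDerivAt (h s) (h' s q) q)
    {t q : ℝ} (ht : 0 ≤ t) (hq : 0 < q) :
    HasDerivAt (fun q => ∫ s in (0:ℝ)..t, h s q) (∫ s in (0:ℝ)..t, h' s q) q := by
  have hK : IsCompact (Icc 0 t ×ˢ Icc (q/2) (2*q)) := isCompact_Icc.prod isCompact_Icc
  obtain ⟨C, hC⟩ := hK.exists_bound_of_continuousOn (hc'.mono (by
    rintro ⟨a, b⟩ ⟨ha, hb⟩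
    exact ⟨ha.1, lt_of_lt_of_le (by positivity) hb.1⟩))
  have hs : Icc (q/2) (2*q) ∈ nhds q := Icc_mem_nhds (by linarith) (by linarith)
  refine (intervalIntegral.hasDerivAt_integral_of_dominated_loc_of_deriv_le (μ := volume)
    (F := fun q s => h s q) (F' := fun q s => h' s q) (bound := fun _ => C) hs ?_ ?_ ?_ ?_ ?_ ?_).2
  · filter_upwards [Ioi_mem_nhds hq] with p hp
    have := bf_ii (bf_slice_s hc hp) ht
    rw [intervalIntegrable_iff] at this
    exact this.1
  · exact bf_ii (bf_slice_s hc hq) ht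
  · have := bf_ii (bf_slice_s hc' hq) ht
    rw [intervalIntegrable_iff] at this
    exact this.1
  · refine Eventually.of_forall ?_
    intro s hs x hx
    rw [uIoc_of_le ht] at hs
    exact hC (s, x) ⟨⟨hs.1.le, hs.2⟩, hx⟩
  · exact intervalIntegrable_const
  · refine Eventually.of_forall ?_
    intro s hs x hx
    rw [uIoc_of_le ht] at hs
    exact hd s hs.1.le x (lt_of_lt_of_le (by positivity) hx.1)

/-- families completely monotone up to order n -/
def BCM : ℕ → (ℝ → ℝ → ℝ) → Prop
  | 0, h => (∀ s, 0 ≤ s → ∀ q, 0 < q → 0 ≤ h s q) ∧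
      ContinuousOn (fun p : ℝ × ℝ => h p.1 p.2) BQ
  | n + 1, h => ((∀ s, 0 ≤ s → ∀ q, 0 < q → 0 ≤ h s q) ∧
      ContinuousOn (fun p : ℝ × ℝ => h p.1 p.2) BQ) ∧
      ∃ h' : ℝ → ℝ → ℝ, (∀ s, 0 ≤ s → ∀ q, 0 < q → HasDerivAt (h s) (-(h' s q)) q) ∧ BCM n h'

theorem BCM.zero {n : ℕ} {h : ℝ → ℝ → ℝ} (H : BCM n h) : BCM 0 h := by
  cases n with
  | zero => exact H
  | succ n => exact H.1

theorem BCM.pred {n : ℕ} : ∀ {h : ℝ → ℝ → ℝ}, BCM (n+1) h → BCM n h := by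
  induction n with
  | zero => intro h H; exact H.1
  | succ n ih =>
    intro h H
    obtain ⟨h0, h', hd, H'⟩ := H
    exact ⟨h0, h', hd, ih H'⟩

theorem BCM.add {n : ℕ} : ∀ {h k : ℝ → ℝ → ℝ}, BCM n h → BCM n k →
    BCM n (fun s q => h s q + k s q) := by
  induction n with
  | zero =>
    intro h k H K
    exact ⟨fun s hs q hq => add_nonneg (H.1 s hs q hq) (K.1 s hs q hq), H.2.add K.2⟩
  | succ n ih =>
    intro h k H K
    obtain ⟨H, h', hd, H'⟩ := H
    obtain ⟨K, k', kd, K'⟩ := K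
    refine ⟨⟨fun s hs q hq => add_nonneg (H.1 s hs q hq) (K.1 s hs q hq), H.2.add K.2⟩, _, ?_, ih H' K'⟩
    intro s hs q hq
    exact ((hd s hs q hq).add (kd s hs q hq)).congr_deriv (by ring)

theorem BCM.mul {n : ℕ} : ∀ {h k : ℝ → ℝ → ℝ}, BCM n h → BCM n k →
    BCM n (fun s q => h s q * k s q) := by
  induction n with
  | zero =>
    intro h k H K
    exact ⟨fun s hs q hq => mul_nonneg (H.1 s hs q hq) (K.1 s hs q hq), H.2.mul K.2⟩
  | succ n ih =>
    intro h k H K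
    have Hp := H.pred
    have Kp := K.pred
    obtain ⟨H, h', hd, H'⟩ := H
    obtain ⟨K, k', kd, K'⟩ := K
    refine ⟨⟨fun s hs q hq => mul_nonneg (H.1 s hs q hq) (K.1 s hs q hq), H.2.mul K.2⟩, _, ?_,
      (ih H' Kp).add (ih Hp K')⟩
    intro s hs q hq
    exact ((hd s hs q hq).mul (kd s hs q hq)).congr_deriv (by ring)

theorem BCM.int {n : ℕ} : ∀ {h : ℝ → ℝ → ℝ}, BCM n h →
    BCM n (fun t q => ∫ s in (0:ℝ)..t, h s q) := by
  have base : ∀ {h : ℝ → ℝ → ℝ}, BCM 0 h → BCM 0 (fun t q => ∫ s in (0:ℝ)..t, h s q) := by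
    intro h H
    refine ⟨fun t ht q hq => intervalIntegral.integral_nonneg ht
      (fun s hs => H.1 s hs.1 q hq), bf_prim H.2⟩
  induction n with
  | zero => exact base
  | succ n ih =>
    intro h H
    obtain ⟨H, h', hd, H'⟩ := H
    refine ⟨base H, _, ?_, ih H'⟩
    intro s hs q hq
    have := bf_deriv_int (h := h) (h' := fun s q => -(h' s q)) H.2 H'.zero.2.neg hd hs hq
    rwa [intervalIntegral.integral_neg] at this

theorem BCM.concl {n : ℕ} : ∀ {h : ℝ → ℝ → ℝ}, BCM n h → ∀ t, 0 ≤ t →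
    ContDiffOn ℝ n (h t) (Ioi 0) ∧
    ∀ q, 0 < q → 0 ≤ (-1:ℝ)^n * iteratedDeriv n (h t) q := by
  induction n with
  | zero =>
    intro h H t ht
    refine ⟨?_, fun q hq => by simpa using H.1 t ht q hq⟩
    simpa using bf_slice_q H.2 ht
  | succ n ih =>
    intro h H t ht
    obtain ⟨H, h', hd, H'⟩ := H
    obtain ⟨i1, i2⟩ := ih H' t ht
    have hE : EqOn (deriv (h t)) (fun q => -(h' t q)) (Ioi 0) :=
      fun q hq => (hd t ht q hq).deriv
    constructor
    · rw [Nat.cast_add, Nat.cast_one, contDiffOn_succ_iff_deriv_of_isOpen isOpen_Ioi]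
      refine ⟨fun q hq => (hd t ht q hq).differentiableAt.differentiableWithinAt, ?_, ?_⟩
      · intro h; exact absurd h (by simp)
      · exact i1.neg.congr hE
    · intro q hq
      rw [iteratedDeriv_succ', hE.iteratedDeriv_of_isOpen isOpen_Ioi n hq, iteratedDeriv_fun_neg]
      have := i2 q hq
      rw [pow_succ]; linarith

theorem bf_lin {D m : ℝ → ℝ} {T : ℝ} (hT : 0 < T) (hD : ContinuousOn D (Icc 0 T))
    (hm : ContinuousOn m (Ici 0))
    (hd : ∀ s ∈ Ioo 0 T, HasDerivAt D (-(m s * D s)) s) :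
    D T = D 0 * Real.exp (-∫ s in (0:ℝ)..T, m s) := by
  set M : ℝ → ℝ := fun s => m (max s 0) with hM
  have hMc : Continuous M := hm.comp_continuous (by fun_prop) (fun s => le_max_right s 0)
  have hI : ∀ s, HasDerivAt (fun s => ∫ r in (0:ℝ)..s, M r) (M s) s := fun s =>
    intervalIntegral.integral_hasDerivAt_right (hMc.intervalIntegrable _ _)
      (hMc.stronglyMeasurableAtFilter _ _) hMc.continuousAt
  have hIc : Continuous (fun s => ∫ r in (0:ℝ)..s, M r) :=
    continuous_iff_continuousAt.2 fun s => (hI s).continuousAt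
  obtain ⟨c, hc, h⟩ := exists_hasDerivAt_eq_slope
    (fun s => D s * Real.exp (∫ r in (0:ℝ)..s, M r)) (fun _ => 0) hT
    (hD.mul (Real.continuous_exp.comp hIc).continuousOn) (by
      intro s hs
      have h0 : M s = m s := by simp [hM, max_eq_left hs.1.le]
      exact ((hd s hs).mul (hI s).exp).congr_deriv (by rw [h0]; ring))
  have h2 : D T * Real.exp (∫ r in (0:ℝ)..T, M r) = D 0 := by
    have h3 : T - 0 ≠ 0 := by simpa using hT.ne'
    rw [eq_comm, div_eq_zero_iff] at h
    rcases h with h | h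
    · simp only [intervalIntegral.integral_same, Real.exp_zero, mul_one] at h; linarith
    · exact absurd h h3
  have h4 : ∫ r in (0:ℝ)..T, M r = ∫ r in (0:ℝ)..T, m r := by
    refine intervalIntegral.integral_congr fun s hs => ?_
    rw [uIcc_of_le hT.le] at hs
    simp [hM, max_eq_left hs.1]
  rw [← h2, h4, mul_assoc, ← Real.exp_add]; simp

def bK (g : ℝ → ℝ) (a b : ℝ) : ℝ := ∫ θ in (0:ℝ)..1, g (a + (b - a) * θ)

theorem bK_cont {g : ℝ → ℝ} (hg : Continuous g) : Continuous (fun p : ℝ × ℝ => bK g p.1 p.2) := by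
  unfold bK
  apply intervalIntegral.continuous_parametric_intervalIntegral_of_continuous'
  simp only [Function.uncurry_def]
  fun_prop

theorem bK_mul {g : ℝ → ℝ} (hg : Continuous g) (a b : ℝ) :
    (b - a) * bK g a b = (∫ u in (0:ℝ)..b, g u) - ∫ u in (0:ℝ)..a, g u := by
  unfold bK
  rw [intervalIntegral.mul_integral_comp_add_mul,
    intervalIntegral.integral_interval_sub_left (hg.intervalIntegrable _ _) (hg.intervalIntegrable _ _)]
  simp

theorem bK_self {g : ℝ → ℝ} (a : ℝ) : bK g a a = g a := by simp [bK]

theorem bK_ge {g : ℝ → ℝ} (hg : Continuous g) {α : ℝ} (h : ∀ u, α ≤ g u) (a b : ℝ) :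
    α ≤ bK g a b := by
  have := intervalIntegral.integral_mono_on (μ := volume) (a := 0) (b := 1) (f := fun _ => α)
    (g := fun θ => g (a + (b - a) * θ)) zero_le_one (by simp)
    (Continuous.intervalIntegrable (by fun_prop) _ _) (fun x _ => h _)
  simpa [bK] using this

theorem bf_exple {α t : ℝ} {m : ℝ → ℝ} (ht : 0 ≤ t) (hm : ContinuousOn m (Ici 0))
    (h : ∀ u, α ≤ m u) : Real.exp (-∫ s in (0:ℝ)..t, m s) ≤ Real.exp (-(α * t)) := by
  have := intervalIntegral.integral_mono_on (μ := volume) (a := 0) (b := t) (f := fun _ => α)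
    (g := m) ht (by simp) (bf_ii hm ht) (fun x _ => h _)
  simp at this
  rw [Real.exp_le_exp]
  linarith

theorem bf_abstract (Ψ g : ℝ → ℝ) (c : ℕ → ℝ → ℝ) (α : ℝ)
    (hg : Continuous g) (hgα : ∀ u, α ≤ g u)
    (hF : ∀ u, 0 < u → Ψ u = ∫ v in (0:ℝ)..u, g v)
    (hgc : ∀ u, 0 < u → HasDerivAt g (c 0 u) u)
    (hcc : ∀ k u, 0 < u → HasDerivAt (c k) (-(c (k+1) u)) u)
    (hc0 : ∀ k u, 0 < u → 0 ≤ c k u)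
    (Φ : ℝ → ℝ → ℝ)
    (hΦcont : ∀ q : ℝ, 0 < q → ContinuousOn (fun t => Φ t q) (Ici 0))
    (hΦinit : ∀ q : ℝ, 0 < q → Φ 0 q = q)
    (hΦode : ∀ q : ℝ, 0 < q → ∀ t : ℝ, 0 < t →
      HasDerivAt (fun s => Φ s q) (-Ψ (Φ t q)) t) :
    ∀ t : ℝ, 0 ≤ t →
      (∀ q : ℝ, 0 < q → ∀ n : ℕ, ContDiffAt ℝ n (fun p => Φ t p) q) ∧
      (∀ q : ℝ, 0 < q → 0 ≤ Φ t q) ∧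
      (∀ k : ℕ, ∀ q : ℝ, 0 < q →
        0 ≤ (-1 : ℝ) ^ k * iteratedDeriv (k + 1) (fun p => Φ t p) q) ∧
      Tendsto (fun q => Φ t q) (nhdsWithin 0 (Ioi 0)) (nhds 0) ∧
      (∀ q : ℝ, 0 < q → Φ t q ≤ q * Real.exp (-(α * t))) := by
  have hKc := bK_cont hg
  -- continuity of the rate
  have hm0 : ∀ q, 0 < q → ContinuousOn (fun s => bK g 0 (Φ s q)) (Ici 0) := fun q hq =>
    hKc.comp_continuousOn (f := fun s => ((0:ℝ), Φ s q)) (continuousOn_const.prodMk (hΦcont q hq))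
  have hrep : ∀ q, 0 < q → ∀ T, 0 < T → (∀ s ∈ Ioo 0 T, 0 < Φ s q) →
      Φ T q = q * Real.exp (-∫ s in (0:ℝ)..T, bK g 0 (Φ s q)) := by
    intro q hq T hT hpos
    have := bf_lin (D := fun s => Φ s q) hT ((hΦcont q hq).mono Icc_subset_Ici_self) (hm0 q hq) (by
      intro s hs
      have h1 := hΦode q hq s hs.1
      have h2 := bK_mul hg 0 (Φ s q)
      rw [hF _ (hpos s hs)] at h1
      convert h1 using 1
      simp at h2
      rw [← h2]; ring)
    simpa [hΦinit q hq] using this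
  have hpos : ∀ q, 0 < q → ∀ t, 0 ≤ t → 0 < Φ t q := by
    intro q hq t ht
    by_contra hneg
    have hclosed : IsCompact (Icc 0 t ∩ (fun s => Φ s q) ⁻¹' Iic 0) := by
      refine isCompact_Icc.of_isClosed_subset ?_ inter_subset_left
      exact ((hΦcont q hq).mono Icc_subset_Ici_self).preimage_isClosed_of_isClosed isClosed_Icc isClosed_Iic
    obtain ⟨T, ⟨hT, hT0⟩, hmin⟩ := hclosed.exists_isLeast ⟨t, ⟨ht, le_rfl⟩, not_lt.1 hneg⟩
    have hT0' : Φ T q ≤ 0 := hT0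
    have hTpos : 0 < T := by
      rcases hT.1.eq_or_lt with h | h
      · rw [← h, hΦinit q hq] at hT0'; linarith
      · exact h
    have := hrep q hq T hTpos (by
      intro s hs
      by_contra hs'
      have := hmin ⟨⟨hs.1.le, hs.2.le.trans hT.2⟩, not_lt.1 hs'⟩
      linarith [hs.2])
    have h2 : 0 < Φ T q := by rw [this]; positivity
    linarith
  have hub : ∀ t, 0 ≤ t → ∀ q, 0 < q → Φ t q ≤ q * Real.exp (-(α * t)) := by
    intro t ht q hq
    rcases ht.eq_or_lt with h | h
    · rw [← h, hΦinit q hq]; simp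
    · rw [hrep q hq t h (fun s hs => hpos q hq s hs.1.le)]
      exact mul_le_mul_of_nonneg_left (bf_exple ht (hm0 q hq) fun u => bK_ge hg hgα _ _) hq.le
  -- differences
  have hm1 : ∀ q, 0 < q → ∀ p, 0 < p → ContinuousOn (fun s => bK g (Φ s q) (Φ s p)) (Ici 0) :=
    fun q hq p hp => hKc.comp_continuousOn (f := fun s => (Φ s q, Φ s p))
      ((hΦcont q hq).prodMk (hΦcont p hp))
  have hdiff : ∀ t, 0 ≤ t → ∀ q, 0 < q → ∀ p, 0 < p → Φ t p - Φ t q =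
      (p - q) * Real.exp (-∫ s in (0:ℝ)..t, bK g (Φ s q) (Φ s p)) := by
    intro t ht q hq p hp
    rcases ht.eq_or_lt with h | h
    · rw [← h, hΦinit q hq, hΦinit p hp]; simp
    have := bf_lin (D := fun s => Φ s p - Φ s q) h
      (((hΦcont p hp).sub (hΦcont q hq)).mono Icc_subset_Ici_self) (hm1 q hq p hp) (by
      intro s hs
      have h1 := (hΦode p hp s hs.1).sub (hΦode q hq s hs.1)
      have h2 := bK_mul hg (Φ s q) (Φ s p)
      rw [hF _ (hpos q hq s hs.1.le), hF _ (hpos p hp s hs.1.le)] at h1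
      exact h1.congr_deriv (by linarith))
    simpa [hΦinit q hq, hΦinit p hp] using this
  -- joint continuity
  have hjc : ContinuousOn (fun p : ℝ × ℝ => Φ p.1 p.2) BQ := by
    have h1 : ContinuousOn (fun p : ℝ × ℝ => Real.exp (α * p.1) * Φ p.1 p.2) BQ := by
      refine continuousOn_prod_of_continuousOn_lipschitzOnWith' _ 1 ?_ ?_
      · intro t ht
        refine LipschitzOnWith.of_dist_le_mul ?_
        intro p hp q hq
        simp only [Real.dist_eq, NNReal.coe_one, one_mul]
        rw [← mul_sub, hdiff t ht q hq p hp, abs_mul, abs_mul, Real.abs_exp, Real.abs_exp]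
        have h2 := bf_exple ht (hm1 q hq p hp) fun u => bK_ge hg hgα _ _
        have h3 : Real.exp (α * t) * Real.exp (-(α * t)) = 1 := by rw [← Real.exp_add]; simp
        have h4 := mul_le_mul_of_nonneg_left h2 (Real.exp_pos (α * t)).le
        rw [h3] at h4
        have := mul_le_mul_of_nonneg_left h4 (abs_nonneg (p - q))
        linarith
      · intro q hq
        exact ContinuousOn.mul (by fun_prop) (hΦcont q hq)
    have h2 : ContinuousOn (fun p : ℝ × ℝ => Real.exp (-(α * p.1)) * (Real.exp (α * p.1) * Φ p.1 p.2)) BQ :=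
      ContinuousOn.mul (by fun_prop) h1
    refine h2.congr ?_
    intro p hp
    simp only
    rw [← mul_assoc, ← Real.exp_add]; simp
  set E : ℝ → ℝ → ℝ := fun t q => Real.exp (-∫ s in (0:ℝ)..t, g (Φ s q)) with hEdef
  have hgj : ContinuousOn (fun p : ℝ × ℝ => g (Φ p.1 p.2)) BQ := hg.comp_continuousOn hjc
  have hEj : ContinuousOn (fun p : ℝ × ℝ => E p.1 p.2) BQ :=
    Real.continuous_exp.comp_continuousOn (bf_prim (h := fun s q => g (Φ s q)) hgj).neg
  have hΦd : ∀ t, 0 ≤ t → ∀ q, 0 < q → HasDerivAt (Φ t) (E t q) q := by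
    intro t ht q hq
    set R : ℝ → ℝ := fun p => Real.exp (-∫ s in (0:ℝ)..t, bK g (Φ s q) (Φ s p)) with hR
    have hRc : ContinuousAt R q := by
      have h1 : ContinuousOn (fun p : ℝ × ℝ => bK g (Φ p.1 q) (Φ p.1 p.2)) BQ := by
        refine hKc.comp_continuousOn (f := fun p : ℝ × ℝ => (Φ p.1 q, Φ p.1 p.2)) ?_
        exact ((hΦcont q hq).comp continuousOn_fst (fun p hp => hp.1)).prodMk hjc
      have h2 := bf_slice_q (h := fun t p => ∫ s in (0:ℝ)..t, bK g (Φ s q) (Φ s p))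
        (bf_prim (h := fun s p => bK g (Φ s q) (Φ s p)) h1) ht
      exact (Real.continuous_exp.comp_continuousOn h2.neg).continuousAt (Ioi_mem_nhds hq)
    have hRq : R q = E t q := by simp only [hR, hEdef, bK_self]
    rw [hasDerivAt_iff_tendsto_slope, ← hRq]
    refine Tendsto.congr' ?_ (hRc.tendsto.mono_left nhdsWithin_le_nhds)
    filter_upwards [self_mem_nhdsWithin, mem_nhdsWithin_of_mem_nhds (Ioi_mem_nhds hq)] with p hp hp0
    rw [slope_def_field, hdiff t ht q hq p hp0]
    have : p - q ≠ 0 := sub_ne_zero.2 hp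
    field_simp
    rfl
  have hck : ∀ k, ContinuousOn (fun p : ℝ × ℝ => c k (Φ p.1 p.2)) BQ := by
    intro k
    have : ContinuousOn (c k) (Ioi 0) := fun u hu => (hcc k u hu).continuousAt.continuousWithinAt
    exact this.comp hjc (fun p hp => hpos _ hp.2 _ hp.1)
  have hgd : ∀ s, 0 ≤ s → ∀ q, 0 < q →
      HasDerivAt (fun q => g (Φ s q)) (c 0 (Φ s q) * E s q) q := fun s hs q hq =>
    (hgc _ (hpos q hq s hs)).comp q (hΦd s hs q hq)
  have main : ∀ n, BCM n E ∧ ∀ k, BCM n (fun s q => c k (Φ s q)) := by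
    intro n
    induction n with
    | zero =>
      exact ⟨⟨fun s hs q hq => (Real.exp_pos _).le, hEj⟩,
        fun k => ⟨fun s hs q hq => hc0 k _ (hpos q hq s hs), hck k⟩⟩
    | succ n ih =>
      obtain ⟨iE, ic⟩ := ih
      refine ⟨⟨iE.zero, _, ?_, iE.mul ((ic 0).mul iE).int⟩, fun k => ⟨(ic k).zero, _, ?_, (ic (k+1)).mul iE⟩⟩
      · intro s hs q hq
        have := (bf_deriv_int (h := fun s q => g (Φ s q)) (h' := fun s q => c 0 (Φ s q) * E s q)
          hgj ((hck 0).mul hEj) hgd hs hq).neg.exp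
        exact this.congr_deriv (by simp only [hEdef, Pi.neg_apply]; ring)
      · intro s hs q hq
        have := (hcc k _ (hpos q hq s hs)).comp q (hΦd s hs q hq)
        exact this.congr_deriv (by ring)
  intro t ht
  have hE' : EqOn (deriv (Φ t)) (E t) (Ioi 0) := fun q hq => (hΦd t ht q hq).deriv
  refine ⟨?_, fun q hq => (hpos q hq t ht).le, ?_, ?_, hub t ht⟩
  · intro q hq n
    have : ContDiffOn ℝ ((n:ℕ) + 1) (Φ t) (Ioi 0) := by
      rw [contDiffOn_succ_iff_deriv_of_isOpen isOpen_Ioi]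
      refine ⟨fun q hq => (hΦd t ht q hq).differentiableAt.differentiableWithinAt, ?_, ?_⟩
      · intro h; exact absurd h (by simp)
      · exact ((main n).1.concl t ht).1.congr hE'
    exact (this.contDiffAt (Ioi_mem_nhds hq)).of_le (by exact_mod_cast Nat.le_succ n)
  · intro k q hq
    rw [iteratedDeriv_succ']
    have := hE'.iteratedDeriv_of_isOpen isOpen_Ioi k hq
    rw [this]
    exact ((main k).1.concl t ht).2 q hq
  · refine tendsto_of_tendsto_of_tendsto_of_le_of_le' (g := fun _ => 0)
      (h := fun q => q * Real.exp (-(α * t))) tendsto_const_nhds ?_ ?_ ?_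
    · have : Continuous (fun q : ℝ => q * Real.exp (-(α * t))) := by fun_prop
      simpa using (this.tendsto 0).mono_left (nhdsWithin_le_nhds (s := Ioi 0))
    · filter_upwards [self_mem_nhdsWithin] with q hq using (hpos q hq t ht).le
    · filter_upwards [self_mem_nhdsWithin] with q hq using hub t ht q hq

theorem bi_pow {a : ℝ} (ha : 0 < a) (n : ℕ) {x : ℝ} (hx : 0 < x) :
    x ^ n * Real.exp (-(a * x)) ≤ n.factorial / a ^ n := by
  have h := Real.pow_div_factorial_le_exp (x := a * x) (by positivity) n
  have hn : (0:ℝ) < n.factorial := by exact_mod_cast n.factorial_pos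
  rw [div_le_iff₀ hn, mul_pow] at h
  rw [Real.exp_neg, le_div_iff₀ (by positivity), ← div_eq_mul_inv, div_mul_eq_mul_div,
    div_le_iff₀ (Real.exp_pos _)]
  linarith

theorem bi_powW {a : ℝ} (ha : 0 < a) (k : ℕ) : ∃ C : ℝ, ∀ x : ℝ, 0 < x →
    x ^ (k + 2) * Real.exp (-(a * x)) ≤ C * min x (x ^ 2) := by
  refine ⟨k.factorial / a ^ k + (k+1).factorial / a ^ (k+1), fun x hx => ?_⟩
  have h1 := bi_pow ha k hx
  have h2 := bi_pow ha (k+1) hx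
  have p1 : (0:ℝ) ≤ k.factorial / a ^ k := by positivity
  have p2 : (0:ℝ) ≤ (k+1).factorial / a ^ (k+1) := by positivity
  rcases min_choice x (x^2) with h | h <;> rw [h]
  · have : x ^ (k + 2) * Real.exp (-(a * x)) = (x ^ (k + 1) * Real.exp (-(a * x))) * x := by ring
    rw [this]
    exact mul_le_mul_of_nonneg_right (by linarith) hx.le
  · have : x ^ (k + 2) * Real.exp (-(a * x)) = (x ^ k * Real.exp (-(a * x))) * x^2 := by ring
    rw [this]
    exact mul_le_mul_of_nonneg_right (by linarith) (by positivity)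

theorem bi_b1 {u M x : ℝ} (hu : 0 ≤ u) (hM : u ≤ M) (hx : 0 < x) :
    0 ≤ x * (1 - Real.exp (-(u * x))) ∧ x * (1 - Real.exp (-(u * x))) ≤ (1 + M) * min x (x ^ 2) := by
  have hy : 0 ≤ u * x := by positivity
  have e1 : Real.exp (-(u * x)) ≤ 1 := Real.exp_le_one_iff.2 (by linarith)
  have e0 := Real.exp_pos (-(u * x))
  have e2 := Real.add_one_le_exp (-(u * x))
  refine ⟨mul_nonneg hx.le (by linarith), ?_⟩
  rcases min_choice x (x^2) with h | h <;> rw [h]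
  · nlinarith
  · have h1 : x * (1 - Real.exp (-(u * x))) ≤ x * (u * x) :=
      mul_le_mul_of_nonneg_left (by linarith) hx.le
    have h2 : u * x ^ 2 ≤ (1 + M) * x ^ 2 := mul_le_mul_of_nonneg_right (by linarith) (by positivity)
    nlinarith

theorem bi_b2 {u M x : ℝ} (hu : 0 ≤ u) (hM : u ≤ M) (hx : 0 < x) :
    0 ≤ Real.exp (-(u * x)) - 1 + u * x ∧
    Real.exp (-(u * x)) - 1 + u * x ≤ (M + M ^ 2) * min x (x ^ 2) := by
  have hy : 0 ≤ u * x := by positivity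
  have e1 : Real.exp (-(u * x)) ≤ 1 := Real.exp_le_one_iff.2 (by linarith)
  have e0 := Real.exp_pos (-(u * x))
  have e2 := Real.add_one_le_exp (-(u * x))
  refine ⟨by linarith, ?_⟩
  have hM0 : 0 ≤ M := hu.trans hM
  rcases min_choice x (x^2) with h | h <;> rw [h]
  · have : u * x ≤ M * x := mul_le_mul_of_nonneg_right hM hx.le
    have : 0 ≤ M ^ 2 * x := by positivity
    nlinarith
  · have e3 : Real.exp (-(u * x)) ≤ 1 - u * x + (u * x) ^ 2 := by
      have h1 := Real.add_one_le_exp (u * x)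
      have h2 : Real.exp (-(u * x)) * Real.exp (u * x) = 1 := by rw [← Real.exp_add]; simp
      have h3 : Real.exp (-(u * x)) * (1 + u * x) ≤ 1 := by nlinarith
      have h4 : 1 ≤ (1 - u * x + (u * x) ^ 2) * (1 + u * x) := by
        have : 0 ≤ (u * x) ^ 3 := by positivity
        nlinarith
      exact le_of_mul_le_mul_right (h3.trans h4) (by linarith)
    have h5 : (u * x) ^ 2 ≤ (M * x) ^ 2 :=
      pow_le_pow_left₀ hy (mul_le_mul_of_nonneg_right hM hx.le) 2
    have : 0 ≤ M * x ^ 2 := by positivity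
    nlinarith

section
variable {μ : Measure ℝ} (hμ : ∀ᵐ x ∂μ, 0 < x) (hW : Integrable (fun x : ℝ => min x (x ^ 2)) μ)
include hμ hW

theorem bi_intpow {a : ℝ} (ha : 0 < a) (k : ℕ) :
    Integrable (fun x => x ^ (k + 2) * Real.exp (-(a * x))) μ := by
  obtain ⟨C, hC⟩ := bi_powW ha k
  refine (hW.const_mul C).mono' (by fun_prop) ?_
  filter_upwards [hμ] with x hx
  rw [Real.norm_of_nonneg (by positivity)]
  exact hC x hx

theorem bi_dpow {u : ℝ} (hu : 0 < u) (k : ℕ) :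
    HasDerivAt (fun u => ∫ x, x ^ (k + 2) * Real.exp (-(u * x)) ∂μ)
      (-∫ x, x ^ (k + 1 + 2) * Real.exp (-(u * x)) ∂μ) u := by
  have := (hasDerivAt_integral_of_dominated_loc_of_deriv_le (μ := μ) (x₀ := u)
    (F := fun u x => x ^ (k + 2) * Real.exp (-(u * x)))
    (F' := fun u x => -(x ^ (k + 1 + 2) * Real.exp (-(u * x))))
    (bound := fun x => x ^ (k + 1 + 2) * Real.exp (-((u/2) * x)))
    (s := Ioi (u/2)) (Ioi_mem_nhds (by linarith)) (Eventually.of_forall fun _ => by fun_prop)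
    (bi_intpow hμ hW hu k) (by fun_prop) ?_ (bi_intpow hμ hW (by positivity) (k+1)) ?_).2
  · rwa [integral_neg] at this
  · filter_upwards [hμ] with x hx v hv
    rw [norm_neg, Real.norm_of_nonneg (by positivity)]
    have : u / 2 * x ≤ v * x := mul_le_mul_of_nonneg_right (mem_Ioi.1 hv).le hx.le
    gcongr
  · refine Eventually.of_forall fun x v _ => ?_
    have h1 : HasDerivAt (fun u => -(u * x)) (-(1 * x)) v := ((hasDerivAt_id v).mul_const x).neg
    exact (h1.exp.const_mul (x ^ (k+2))).congr_deriv (by ring)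

theorem bi_int1 {u : ℝ} (hu : 0 ≤ u) :
    Integrable (fun x => x * (1 - Real.exp (-(u * x)))) μ := by
  refine (hW.const_mul (1 + u)).mono' (by fun_prop) ?_
  filter_upwards [hμ] with x hx
  rw [Real.norm_of_nonneg (bi_b1 hu le_rfl hx).1]
  exact (bi_b1 hu le_rfl hx).2

theorem bi_int2 {u : ℝ} (hu : 0 ≤ u) :
    Integrable (fun x => Real.exp (-(u * x)) - 1 + u * x) μ := by
  refine (hW.const_mul (u + u ^ 2)).mono' (by fun_prop) ?_
  filter_upwards [hμ] with x hx
  rw [Real.norm_of_nonneg (bi_b2 hu le_rfl hx).1]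
  exact (bi_b2 hu le_rfl hx).2

theorem bi_d1 {u : ℝ} (hu : 0 < u) :
    HasDerivAt (fun u => ∫ x, x * (1 - Real.exp (-(u * x))) ∂μ)
      (∫ x, x ^ (0 + 2) * Real.exp (-(u * x)) ∂μ) u := by
  refine (hasDerivAt_integral_of_dominated_loc_of_deriv_le (μ := μ) (x₀ := u)
    (F := fun u x => x * (1 - Real.exp (-(u * x))))
    (F' := fun u x => (x ^ (0 + 2) * Real.exp (-(u * x))))
    (bound := fun x => x ^ (0 + 2) * Real.exp (-((u/2) * x)))
    (s := Ioi (u/2)) (Ioi_mem_nhds (by linarith)) (Eventually.of_forall fun _ => by fun_prop)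
    (bi_int1 hμ hW hu.le) (by fun_prop) ?_ (bi_intpow hμ hW (by positivity) 0) ?_).2
  · filter_upwards [hμ] with x hx v hv
    rw [Real.norm_of_nonneg (by positivity)]
    have : u / 2 * x ≤ v * x := mul_le_mul_of_nonneg_right (mem_Ioi.1 hv).le hx.le
    gcongr
  · refine Eventually.of_forall fun x v _ => ?_
    have h1 : HasDerivAt (fun u => -(u * x)) (-(1 * x)) v := ((hasDerivAt_id v).mul_const x).neg
    exact ((h1.exp.const_sub 1).const_mul x).congr_deriv (by ring)

theorem bi_d2 {u : ℝ} (hu : 0 < u) :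
    HasDerivAt (fun u => ∫ x, (Real.exp (-(u * x)) - 1 + u * x) ∂μ)
      (∫ x, x * (1 - Real.exp (-(u * x))) ∂μ) u := by
  refine (hasDerivAt_integral_of_dominated_loc_of_deriv_le (μ := μ) (x₀ := u)
    (F := fun u x => Real.exp (-(u * x)) - 1 + u * x)
    (F' := fun u x => x * (1 - Real.exp (-(u * x))))
    (bound := fun x => (1 + 2 * u) * min x (x ^ 2))
    (s := Ioo 0 (2 * u)) (Ioo_mem_nhds hu (by linarith)) (Eventually.of_forall fun _ => by fun_prop)
    (bi_int2 hμ hW hu.le) (by fun_prop) ?_ (hW.const_mul _) ?_).2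
  · filter_upwards [hμ] with x hx v hv
    rw [Real.norm_of_nonneg (bi_b1 hv.1.le hv.2.le hx).1]
    exact (bi_b1 hv.1.le hv.2.le hx).2
  · refine Eventually.of_forall fun x v _ => ?_
    have h0 : HasDerivAt (fun u => u * x) (1 * x) v := (hasDerivAt_id v).mul_const x
    exact ((h0.neg.exp.sub_const 1).add h0).congr_deriv (by simp only [Pi.neg_apply]; ring)

theorem bi_c1 : Continuous (fun u => ∫ x, x * (1 - Real.exp (-(max u 0 * x))) ∂μ) := by
  rw [continuous_iff_continuousAt]
  intro u
  refine continuousAt_of_dominated (bound := fun x => (1 + (max u 0 + 1)) * min x (x ^ 2))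
    (Eventually.of_forall fun _ => by fun_prop) ?_ (hW.const_mul _)
    (Eventually.of_forall fun _ => by fun_prop)
  have hc : Continuous (fun v : ℝ => max v 0) := by fun_prop
  filter_upwards [hc.continuousAt (x := u) (Iio_mem_nhds (lt_add_one (max u 0)))] with v hv
  have hv : max v 0 < max u 0 + 1 := hv
  filter_upwards [hμ] with x hx
  rw [Real.norm_of_nonneg (bi_b1 (le_max_right v 0) hv.le hx).1]
  exact (bi_b1 (le_max_right v 0) hv.le hx).2

theorem bi_c2 : Continuous (fun u => ∫ x, (Real.exp (-(max u 0 * x)) - 1 + max u 0 * x) ∂μ) := by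
  rw [continuous_iff_continuousAt]
  intro u
  refine continuousAt_of_dominated
    (bound := fun x => ((max u 0 + 1) + (max u 0 + 1) ^ 2) * min x (x ^ 2))
    (Eventually.of_forall fun _ => by fun_prop) ?_ (hW.const_mul _)
    (Eventually.of_forall fun _ => by fun_prop)
  have hc : Continuous (fun v : ℝ => max v 0) := by fun_prop
  filter_upwards [hc.continuousAt (x := u) (Iio_mem_nhds (lt_add_one (max u 0)))] with v hv
  have hv : max v 0 < max u 0 + 1 := hv
  filter_upwards [hμ] with x hx
  rw [Real.norm_of_nonneg (bi_b2 (le_max_right v 0) hv.le hx).1]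
  exact (bi_b2 (le_max_right v 0) hv.le hx).2

end

/-- for a branching mechanism `Ψ`, the solution `Φ(t,·)` of the
backward equation `∂_t Φ = -Ψ(Φ)`, `Φ(0,q) = q`, is a Bernstein function for
each fixed `t ≥ 0`, with `Φ(t,0⁺) = 0` and `0 ≤ Φ(t,q) ≤ q e^{-αt}`. -/
theorem backward_flow_is_Bernstein
    (Ψ : ℝ → ℝ) (α β : ℝ) (π : Measure ℝ)
    (hβ : 0 ≤ β)
    (hπfin : ∫⁻ x in Ioi (0:ℝ), ENNReal.ofReal (min x (x ^ 2)) ∂π < ⊤)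
    (hΨ : ∀ u : ℝ, 0 < u →
      Ψ u = α * u + β * u ^ 2 + ∫ x in Ioi (0:ℝ), (Real.exp (-(u * x)) - 1 + u * x) ∂π)
    (Φ : ℝ → ℝ → ℝ)
    (hΦcont : ∀ q : ℝ, 0 < q → ContinuousOn (fun t => Φ t q) (Ici 0))
    (hΦinit : ∀ q : ℝ, 0 < q → Φ 0 q = q)
    (hΦode : ∀ q : ℝ, 0 < q → ∀ t : ℝ, 0 < t →
      HasDerivAt (fun s => Φ s q) (-Ψ (Φ t q)) t) :
    ∀ t : ℝ, 0 ≤ t →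
      (∀ q : ℝ, 0 < q → ∀ n : ℕ, ContDiffAt ℝ n (fun p => Φ t p) q) ∧
      (∀ q : ℝ, 0 < q → 0 ≤ Φ t q) ∧
      (∀ k : ℕ, ∀ q : ℝ, 0 < q →
        0 ≤ (-1 : ℝ) ^ k * iteratedDeriv (k + 1) (fun p => Φ t p) q) ∧
      Tendsto (fun q => Φ t q) (nhdsWithin 0 (Ioi 0)) (nhds 0) ∧
      (∀ q : ℝ, 0 < q → Φ t q ≤ q * Real.exp (-(α * t))) := by
  set μ := π.restrict (Ioi (0:ℝ)) with hμdef
  have hμ : ∀ᵐ x ∂μ, 0 < x := ae_restrict_mem measurableSet_Ioi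
  have hW : Integrable (fun x : ℝ => min x (x ^ 2)) μ := by
    refine ⟨by fun_prop, ?_⟩
    rw [hasFiniteIntegral_iff_ofReal]
    · exact hπfin
    · filter_upwards [hμ] with x hx
      exact le_min hx.le (by positivity)
  set g : ℝ → ℝ := fun u => α + 2 * β * max u 0 + ∫ x, x * (1 - Real.exp (-(max u 0 * x))) ∂μ with hgdef
  have hg : Continuous g := by
    have := bi_c1 hμ hW
    exact Continuous.add (by fun_prop) this
  have hgu : ∀ u, 0 < u → ∀ᶠ v in nhds u,
      g v = α + 2 * β * v + ∫ x, x * (1 - Real.exp (-(v * x))) ∂μ := by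
    intro u hu
    filter_upwards [Ioi_mem_nhds hu] with v hv
    simp only [hgdef, max_eq_left (mem_Ioi.1 hv).le]
  refine bf_abstract Ψ g
    (fun k u => (if k = 0 then 2 * β else 0) + ∫ x, x ^ (k + 2) * Real.exp (-(u * x)) ∂μ) α hg
    ?_ ?_ ?_ ?_ ?_ Φ hΦcont hΦinit hΦode
  · intro u
    have h1 : 0 ≤ ∫ x, x * (1 - Real.exp (-(max u 0 * x))) ∂μ := by
      apply integral_nonneg_of_ae
      filter_upwards [hμ] with x hx using (bi_b1 (le_max_right u 0) le_rfl hx).1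
    have h2 : 0 ≤ 2 * β * max u 0 := by positivity
    simp only [hgdef]; linarith
  · intro u hu
    have hc : Continuous (fun u => α * max u 0 + β * (max u 0) ^ 2 +
        ∫ x, (Real.exp (-(max u 0 * x)) - 1 + max u 0 * x) ∂μ) :=
      Continuous.add (by fun_prop) (bi_c2 hμ hW)
    rw [intervalIntegral.integral_eq_sub_of_hasDerivAt_of_le hu.le hc.continuousOn ?_
      (hg.intervalIntegrable _ _), hΨ u hu]
    · simp [max_eq_left hu.le]
    · intro v hv
      have h1 := (((hasDerivAt_id v).const_mul α).add (((hasDerivAt_id v).pow 2).const_mul β)).add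
        (bi_d2 hμ hW hv.1)
      refine (h1.congr_deriv ?_).congr_of_eventuallyEq ?_
      · simp only [hgdef, max_eq_left hv.1.le, id]; norm_num; ring
      · filter_upwards [Ioi_mem_nhds hv.1] with w hw
        simp [max_eq_left (mem_Ioi.1 hw).le]
  · intro u hu
    have h1 := (((hasDerivAt_id u).const_mul (2 * β)).const_add α).add (bi_d1 hμ hW hu)
    refine (h1.congr_deriv (by simp)).congr_of_eventuallyEq ?_
    filter_upwards [hgu u hu] with v hv
    rw [hv]; rfl
  · intro k u hu
    exact ((bi_dpow hμ hW hu k).const_add _).congr_deriv (by simp)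
  · intro k u hu
    have h1 : 0 ≤ ∫ x, x ^ (k + 2) * Real.exp (-(u * x)) ∂μ := by
      apply integral_nonneg_of_ae
      filter_upwards [hμ] with x hx
      simp only [Pi.zero_apply]; positivity
    have h2 : (0:ℝ) ≤ if k = 0 then 2 * β else 0 := by split_ifs <;> positivity
    exact add_nonneg h2 h1
end
end

section
/- Let Ψ(u) = αu + βu² + ∫_{(0,∞)} (e^{−ux} − 1 + ux) π(dx) be a branching mechanism and let Φ be the unique solution of ∂_t Φ(t,q) = −Ψ(Φ(t,q)), Φ(0,q) = q, for t > 0, q ∈ (0,∞). For t > 0 let b_t = lim_{q→∞} ∂_q Φ(t,q) (this limit exists since q ↦ ∂_q Φ(t,q) is nonnegative and nonincreasing). Then the following are equivalent: (a) b_t = 0 for some t > 0; (b) b_t = 0 for all t > 0; (c) lim_{u→∞} Ψ′(u) = ∞. -/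
open MeasureTheory Set Filter

noncomputable section

lemma aux_lower (f f' : ℝ → ℝ) (L T : ℝ) (hT : 0 < T) (hc : ContinuousOn f (Ici 0))
    (hd : ∀ t, 0 < t → HasDerivAt f (f' t) t) (h0 : 0 < f 0)
    (hL : ∀ t, 0 < t → t ≤ T → 0 < f t → -L * f t ≤ f' t) :
    f 0 * Real.exp (-(L + 1) * T) ≤ f T := by
  have hc0 : Tendsto f (nhdsWithin 0 (Ioi 0)) (nhds (f 0)) :=
    (hc 0 (by simp)).mono_left (nhdsWithin_mono _ Ioi_subset_Ici_self)
  have key : ∀ a, 0 < a → a < T → 0 < f a → f a * Real.exp (-(L + 1) * (T - a)) ≤ f T := by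
    intro a ha haT hfa
    have hB : ∀ x : ℝ, HasDerivAt (fun t => -(f a * Real.exp (-(L + 1) * (t - a))))
        ((L + 1) * (f a * Real.exp (-(L + 1) * (x - a)))) x := by
      intro x
      have h1 : HasDerivAt (fun t : ℝ => -(L + 1) * (t - a)) (-(L + 1) * 1) x :=
        ((hasDerivAt_id x).sub_const a).const_mul _
      have := ((h1.exp).const_mul (f a)).neg
      exact this.congr_deriv (by ring)
    have := image_le_of_deriv_right_lt_deriv_boundary (f := fun t => - f t)
      (f' := fun t => - f' t) (a := a) (b := T)
      (B := fun t => -(f a * Real.exp (-(L + 1) * (t - a))))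
      (B' := fun x => (L + 1) * (f a * Real.exp (-(L + 1) * (x - a))))
      ((hc.mono (fun x hx => le_trans ha.le hx.1)).neg)
      (fun x hx => ((hd x (lt_of_lt_of_le ha hx.1)).neg).hasDerivWithinAt)
      (by simp) hB
      (by
        intro x hx hxe
        have hpos : 0 < f a * Real.exp (-(L + 1) * (x - a)) := by positivity
        have hfx : f x = f a * Real.exp (-(L + 1) * (x - a)) := by
          simpa using hxe
        have := hL x (lt_of_lt_of_le ha hx.1) hx.2.le (hfx ▸ hpos)
        rw [← hfx] at hpos ⊢
        nlinarith)
      (right_mem_Icc.2 haT.le)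
    simpa using this
  have hlim : Tendsto (fun a => f a * Real.exp (-(L + 1) * (T - a))) (nhdsWithin 0 (Ioi 0))
      (nhds (f 0 * Real.exp (-(L + 1) * (T - 0)))) := by
    refine hc0.mul ?_
    have : Continuous (fun a : ℝ => Real.exp (-(L + 1) * (T - a))) := by fun_prop
    exact (this.tendsto 0).mono_left nhdsWithin_le_nhds
  rw [sub_zero] at hlim
  refine le_of_tendsto hlim ?_
  filter_upwards [hc0.eventually (lt_mem_nhds h0), self_mem_nhdsWithin,
    mem_nhdsWithin_of_mem_nhds (Iio_mem_nhds hT)] with a h1 h2 h3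
  exact key a h2 h3 h1

lemma aux_upper (f f' : ℝ → ℝ) (M T : ℝ) (hT : 0 < T) (hc : ContinuousOn f (Ici 0))
    (hd : ∀ t, 0 < t → HasDerivAt f (f' t) t)
    (hM : ∀ t, 0 < t → t < T → f' t ≤ -M * f t) :
    f T ≤ f 0 * Real.exp (-M * T) := by
  have hD : ∀ x, 0 < x → HasDerivAt (fun t => f t * Real.exp (M * t))
      (f' x * Real.exp (M * x) + f x * (Real.exp (M * x) * (M * 1))) x := by
    intro x hx
    exact (hd x hx).mul (((hasDerivAt_id x).const_mul M).exp)
  have hanti : AntitoneOn (fun t => f t * Real.exp (M * t)) (Icc 0 T) := by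
    refine antitoneOn_of_deriv_nonpos (convex_Icc 0 T) ?_ ?_ ?_
    · exact (hc.mono (fun x hx => hx.1)).mul (by fun_prop)
    · intro x hx
      rw [interior_Icc] at hx
      exact (hD x hx.1).differentiableAt.differentiableWithinAt
    · intro x hx
      rw [interior_Icc] at hx
      rw [(hD x hx.1).deriv]
      have := hM x hx.1 hx.2
      have := Real.exp_pos (M * x)
      nlinarith
  have := hanti (left_mem_Icc.2 hT.le) (right_mem_Icc.2 hT.le) hT.le
  simp only [mul_zero, Real.exp_zero, mul_one] at this
  have he : Real.exp (M * T) * Real.exp (-M * T) = 1 := by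
    rw [← Real.exp_add]; simp
  calc f T = (f T * Real.exp (M * T)) * Real.exp (-M * T) := by rw [mul_assoc, he, mul_one]
    _ ≤ _ := by gcongr

lemma aux_deriv_ge (f : ℝ → ℝ) (c q : ℝ) (hd : DifferentiableAt ℝ f q)
    (h : ∀ p, q < p → c * (p - q) ≤ f p - f q) : c ≤ deriv f q := by
  have h1 := (hd.hasDerivAt.hasDerivWithinAt (s := Ioi q))
  rw [hasDerivWithinAt_iff_tendsto_slope' (by simp)] at h1
  refine ge_of_tendsto h1 ?_
  filter_upwards [self_mem_nhdsWithin] with p hp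
  have hp' : 0 < p - q := sub_pos.2 hp
  rw [slope_def_field, le_div_iff₀ hp']
  exact h p hp

/-- basic analysis of the branching mechanism -/
lemma aux_psi (Ψ : ℝ → ℝ) (α β : ℝ) (π : Measure ℝ)
    (hβ : 0 ≤ β)
    (hπfin : ∫⁻ x in Ioi (0:ℝ), ENNReal.ofReal (min x (x ^ 2)) ∂π < ⊤)
    (hΨ : ∀ u : ℝ, 0 < u →
      Ψ u = α * u + β * u ^ 2 + ∫ x in Ioi (0:ℝ), (Real.exp (-(u * x)) - 1 + u * x) ∂π) :
    (∀ u, 0 < u → DifferentiableAt ℝ Ψ u) ∧ MonotoneOn (deriv Ψ) (Ioi 0) ∧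
    ∀ K, ∃ C, ∀ u, 0 < u → u ≤ K → Ψ u ≤ C * u := by
  set μ := π.restrict (Ioi (0:ℝ)) with hμ
  have hpos : ∀ᵐ x ∂μ, 0 < x := ae_restrict_mem measurableSet_Ioi
  have hI : Integrable (fun x : ℝ => min x (x ^ 2)) μ := by
    refine ⟨by fun_prop, ?_⟩
    rw [hasFiniteIntegral_iff_ofReal]
    · exact hπfin
    · filter_upwards [hpos] with x hx
      simp only [Pi.zero_apply]
      positivity
  have hbd : ∀ u x : ℝ, 0 < u → 0 < x → 0 ≤ x * (1 - Real.exp (-(u * x))) ∧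
      ∀ K, u ≤ K → x * (1 - Real.exp (-(u * x))) ≤ max 1 K * min x (x ^ 2) := by
    intro u x hu hx
    have hux : 0 < u * x := mul_pos hu hx
    have h1 : Real.exp (-(u * x)) ≤ 1 := Real.exp_le_one_iff.2 (by linarith)
    have h2 := Real.add_one_le_exp (-(u * x))
    have h3 := Real.exp_pos (-(u * x))
    refine ⟨mul_nonneg hx.le (by linarith), fun K hK => ?_⟩
    have m1 := le_max_left 1 K
    have m2 := le_max_right 1 K
    rcases min_choice x (x ^ 2) with h | h <;> rw [h]
    · nlinarith
    · have : 1 - Real.exp (-(u * x)) ≤ max 1 K * x := by nlinarith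
      nlinarith
  have hbd2 : ∀ u x : ℝ, 0 < u → 0 < x → 0 ≤ Real.exp (-(u * x)) - 1 + u * x ∧
      ∀ K, u ≤ K → Real.exp (-(u * x)) - 1 + u * x ≤ u * (max 1 K * min x (x ^ 2)) := by
    intro u x hu hx
    have hux : 0 < u * x := mul_pos hu hx
    have h2 := Real.add_one_le_exp (-(u * x))
    have h4 := Real.add_one_le_exp (u * x)
    refine ⟨by linarith, fun K hK => ?_⟩
    have h5 : Real.exp (-(u * x)) * Real.exp (u * x) = 1 := by rw [← Real.exp_add]; simp
    have h3 := Real.exp_pos (-(u * x))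
    -- e^{-y} - 1 + y ≤ y (1 - e^{-y})  iff (1+y) e^{-y} ≤ 1
    have h6 : Real.exp (-(u * x)) - 1 + u * x ≤ u * (x * (1 - Real.exp (-(u * x)))) := by
      nlinarith
    exact h6.trans (mul_le_mul_of_nonneg_left ((hbd u x hu hx).2 K hK) hu.le)
  have hint2 : ∀ u, 0 < u → Integrable (fun x => Real.exp (-(u * x)) - 1 + u * x) μ := by
    intro u hu
    refine Integrable.mono' ((hI.const_mul (max 1 u)).const_mul u) (by fun_prop) ?_
    filter_upwards [hpos] with x hx
    rw [Real.norm_of_nonneg (hbd2 u x hu hx).1]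
    exact (hbd2 u x hu hx).2 u le_rfl
  have hint1 : ∀ u, 0 < u → Integrable (fun x => x * (1 - Real.exp (-(u * x)))) μ := by
    intro u hu
    refine Integrable.mono' (hI.const_mul (max 1 u)) (by fun_prop) ?_
    filter_upwards [hpos] with x hx
    rw [Real.norm_of_nonneg (hbd u x hu hx).1]
    exact (hbd u x hu hx).2 u le_rfl
  have hder : ∀ u, 0 < u → HasDerivAt Ψ
      (α + 2 * β * u + ∫ x, x * (1 - Real.exp (-(u * x))) ∂μ) u := by
    intro u hu
    have h1 : HasDerivAt (fun v => ∫ x, (Real.exp (-(v * x)) - 1 + v * x) ∂μ)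
        (∫ x, x * (1 - Real.exp (-(u * x))) ∂μ) u := by
      refine (hasDerivAt_integral_of_dominated_loc_of_deriv_le (s := Ioo 0 (2 * u))
        (bound := fun x => max 1 (2 * u) * min x (x ^ 2))
        (F := fun v x => Real.exp (-(v * x)) - 1 + v * x)
        (F' := fun v x => x * (1 - Real.exp (-(v * x)))) (Ioo_mem_nhds hu (by linarith))
        (Eventually.of_forall fun v => by fun_prop) (hint2 u hu) (by fun_prop) ?_
        (hI.const_mul _) ?_).2
      · filter_upwards [hpos] with x hx v hv
        rw [Real.norm_of_nonneg (hbd v x hv.1 hx).1]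
        exact (hbd v x hv.1 hx).2 _ hv.2.le
      · refine Eventually.of_forall fun x v _ => ?_
        have h : HasDerivAt (fun v : ℝ => v * x) (1 * x) v := (hasDerivAt_id v).mul_const x
        have := ((h.neg.exp).sub_const 1).add h
        exact this.congr_deriv (by simp only [Pi.neg_apply]; ring)
    have h2 : HasDerivAt (fun v : ℝ => α * v + β * v ^ 2) (α + 2 * β * u) u := by
      have := ((hasDerivAt_id u).const_mul α).add (((hasDerivAt_id u).pow 2).const_mul β)
      exact this.congr_deriv (by simp only [id, mul_one]; norm_num; ring)
    refine (h2.add h1).congr_of_eventuallyEq ?_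
    filter_upwards [Ioi_mem_nhds hu] with v hv
    exact hΨ v hv
  refine ⟨fun u hu => (hder u hu).differentiableAt, ?_, ?_⟩
  · intro u hu v hv huv
    rw [(hder u hu).deriv, (hder v hv).deriv]
    have h1 : ∫ x, x * (1 - Real.exp (-(u * x))) ∂μ ≤ ∫ x, x * (1 - Real.exp (-(v * x))) ∂μ := by
      refine integral_mono_ae (hint1 u hu) (hint1 v hv) ?_
      filter_upwards [hpos] with x hx
      have : Real.exp (-(v * x)) ≤ Real.exp (-(u * x)) := by
        apply Real.exp_le_exp.2; nlinarith
      exact mul_le_mul_of_nonneg_left (by linarith) hx.le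
    have h2 := mul_le_mul_of_nonneg_left huv hβ
    linarith
  · intro K
    refine ⟨α + β * K + max 1 K * ∫ x, min x (x ^ 2) ∂μ, fun u hu huK => ?_⟩
    rw [hΨ u hu]
    have h1 : ∫ x, (Real.exp (-(u * x)) - 1 + u * x) ∂μ ≤
        ∫ x, u * (max 1 K * min x (x ^ 2)) ∂μ := by
      refine integral_mono_ae (hint2 u hu) ((hI.const_mul _).const_mul _) ?_
      filter_upwards [hpos] with x hx
      exact (hbd2 u x hu hx).2 K huK
    rw [integral_const_mul, integral_const_mul] at h1
    have h2 : β * u ^ 2 ≤ β * K * u := by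
      have := mul_le_mul_of_nonneg_left huK (mul_nonneg hβ hu.le)
      nlinarith
    linarith

theorem drift_vanishes_iff_PsiPrime_unbounded
    (Ψ : ℝ → ℝ) (α β : ℝ) (π : Measure ℝ)
    (hβ : 0 ≤ β)
    (hπfin : ∫⁻ x in Ioi (0:ℝ), ENNReal.ofReal (min x (x ^ 2)) ∂π < ⊤)
    (hΨ : ∀ u : ℝ, 0 < u →
      Ψ u = α * u + β * u ^ 2 + ∫ x in Ioi (0:ℝ), (Real.exp (-(u * x)) - 1 + u * x) ∂π)
    (Φ : ℝ → ℝ → ℝ)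
    (hΦcont : ∀ q : ℝ, 0 < q → ContinuousOn (fun t => Φ t q) (Ici 0))
    (hΦinit : ∀ q : ℝ, 0 < q → Φ 0 q = q)
    (hΦode : ∀ q : ℝ, 0 < q → ∀ t : ℝ, 0 < t →
      HasDerivAt (fun s => Φ s q) (-Ψ (Φ t q)) t)
    (b : ℝ → ℝ)
    (hb : ∀ t : ℝ, 0 < t →
      Tendsto (fun q => deriv (fun p => Φ t p) q) atTop (nhds (b t))) :
    ((∃ t : ℝ, 0 < t ∧ b t = 0) ↔ (∀ t : ℝ, 0 < t → b t = 0)) ∧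
    ((∃ t : ℝ, 0 < t ∧ b t = 0) ↔ Tendsto (fun u => deriv Ψ u) atTop atTop) := by
  obtain ⟨hdiff, hmono, hC⟩ := aux_psi Ψ α β π hβ hπfin hΨ
  -- mean value bounds
  have hup : ∀ L K u v, 0 < u → u ≤ v → v ≤ K → (∀ w, 0 < w → w ≤ K → deriv Ψ w ≤ L) →
      Ψ v - Ψ u ≤ L * (v - u) := by
    intro L K u v hu huv hvK h
    refine Convex.image_sub_le_mul_sub_of_deriv_le (convex_Icc u v) ?_ ?_ ?_ u
      (left_mem_Icc.2 huv) v (right_mem_Icc.2 huv) huv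
    · exact fun x hx => (hdiff x (hu.trans_le hx.1)).continuousAt.continuousWithinAt
    · intro x hx
      rw [interior_Icc] at hx
      exact (hdiff x (hu.trans hx.1)).differentiableWithinAt
    · intro x hx
      rw [interior_Icc] at hx
      exact h x (hu.trans hx.1) (hx.2.le.trans hvK)
  have hlow : ∀ M K u v, 0 < K → K ≤ u → u ≤ v → (∀ w, K ≤ w → M ≤ deriv Ψ w) →
      M * (v - u) ≤ Ψ v - Ψ u := by
    intro M K u v hK hu huv h
    have hu0 := hK.trans_le hu
    refine Convex.mul_sub_le_image_sub_of_le_deriv (convex_Icc u v) ?_ ?_ ?_ u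
      (left_mem_Icc.2 huv) v (right_mem_Icc.2 huv) huv
    · exact fun x hx => (hdiff x (hu0.trans_le hx.1)).continuousAt.continuousWithinAt
    · intro x hx
      rw [interior_Icc] at hx
      exact (hdiff x (hu0.trans hx.1)).differentiableWithinAt
    · intro x hx
      rw [interior_Icc] at hx
      exact h x (hu.trans hx.1.le)
  have hbound : ∀ q, 0 < q → ∀ T, ∃ K, 0 < K ∧ ∀ t, 0 ≤ t → t ≤ T → Φ t q ≤ K := by
    intro q hq T
    obtain ⟨K, hK⟩ := (isCompact_Icc (a := (0:ℝ)) (b := T)).bddAbove_image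
      ((hΦcont q hq).mono (fun x hx => hx.1))
    refine ⟨max K 1, by positivity, fun t h0 h1 => ?_⟩
    exact (hK ⟨t, ⟨h0, h1⟩, rfl⟩).trans (le_max_left _ _)
  have hΦpos : ∀ q, 0 < q → ∀ t, 0 ≤ t → 0 < Φ t q := by
    intro q hq t ht
    rcases ht.eq_or_lt with rfl | ht
    · rwa [hΦinit q hq]
    obtain ⟨K, hK0, hK⟩ := hbound q hq t
    obtain ⟨C, hC⟩ := hC K
    have := aux_lower (fun s => Φ s q) (fun s => -Ψ (Φ s q)) C t ht (hΦcont q hq) (hΦode q hq)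
      (by simpa [hΦinit q hq] using hq)
      (fun s hs hst hp => by
        have := hC _ hp (hK s hs.le hst)
        linarith)
    refine lt_of_lt_of_le ?_ this
    have : 0 < Φ 0 q := by rwa [hΦinit q hq]
    positivity
  have hDd : ∀ p q, 0 < p → 0 < q → ∀ t, 0 < t → HasDerivAt (fun s => Φ s q - Φ s p)
      (-Ψ (Φ t q) - -Ψ (Φ t p)) t := fun p q hp hq t ht => (hΦode q hq t ht).sub (hΦode p hp t ht)
  have hDc : ∀ p q, 0 < p → 0 < q → ContinuousOn (fun s => Φ s q - Φ s p) (Ici 0) :=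
    fun p q hp hq => (hΦcont q hq).sub (hΦcont p hp)
  have hDlow : ∀ L p q t, 0 < p → p < q → 0 < t →
      (∃ K, (∀ s, 0 ≤ s → s ≤ t → Φ s q ≤ K) ∧ (∀ w, 0 < w → w ≤ K → deriv Ψ w ≤ L)) →
      (q - p) * Real.exp (-(L + 1) * t) ≤ Φ t q - Φ t p := by
    rintro L p q t hp hpq ht ⟨K, hK, hL⟩
    have hq := hp.trans hpq
    have := aux_lower (fun s => Φ s q - Φ s p) (fun s => -Ψ (Φ s q) - -Ψ (Φ s p)) L t ht
      (hDc p q hp hq) (hDd p q hp hq) (by simp only [hΦinit q hq, hΦinit p hp]; linarith)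
      (fun s hs hst h => by
        have := hup L K (Φ s p) (Φ s q) (hΦpos p hp s hs.le) (by linarith) (hK s hs.le hst) hL
        linarith)
    simpa only [hΦinit q hq, hΦinit p hp] using this
  have hDpos : ∀ p q t, 0 < p → p < q → 0 ≤ t → Φ t p < Φ t q := by
    intro p q t hp hpq ht
    rcases ht.eq_or_lt with rfl | ht
    · rwa [hΦinit p hp, hΦinit q (hp.trans hpq)]
    obtain ⟨K, hK0, hK⟩ := hbound q (hp.trans hpq) t
    have := hDlow (deriv Ψ K) p q t hp hpq ht ⟨K, hK, fun w hw hwK => hmono hw hK0 hwK⟩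
    have h2 : 0 < (q - p) * Real.exp (-(deriv Ψ K + 1) * t) :=
      mul_pos (by linarith) (Real.exp_pos _)
    linarith
  have hA : (∃ t : ℝ, 0 < t ∧ b t = 0) → Tendsto (fun u => deriv Ψ u) atTop atTop := by
    rintro ⟨t, ht, hbt⟩
    by_contra hnot
    have hL : ∃ L, ∀ w, 0 < w → deriv Ψ w ≤ L := by
      by_contra! h
      apply hnot
      rw [tendsto_atTop]
      intro M
      obtain ⟨w, hw, hM⟩ := h M
      filter_upwards [eventually_ge_atTop w] with v hv
      exact hM.le.trans (hmono hw (hw.trans_le hv) hv)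
    obtain ⟨L, hL⟩ := hL
    have hmonoΦ : MonotoneOn (fun p => Φ t p) (Ioi 0) := by
      intro p hp q hq hpq
      rcases hpq.eq_or_lt with rfl | h
      · exact le_rfl
      · exact (hDpos p q t hp h ht.le).le
    have hae := hmonoΦ.ae_differentiableWithinAt measurableSet_Ioi
    rw [ae_restrict_iff' measurableSet_Ioi] at hae
    have hlt : ∀ᶠ q in atTop, deriv (fun p => Φ t p) q < Real.exp (-(L + 1) * t) :=
      (hb t ht).eventually (gt_mem_nhds (by rw [hbt]; exact Real.exp_pos _))
    obtain ⟨Q, hQ⟩ := eventually_atTop.1 hlt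
    have hex : ∃ q ∈ Ioi (max Q 0), DifferentiableWithinAt ℝ (fun p => Φ t p) (Ioi 0) q := by
      by_contra! h
      have h0 : volume (Ioi (max Q 0)) = 0 := by
        refine measure_mono_null ?_ (ae_iff.1 hae)
        intro x hx
        simp only [mem_ofPred_eq, Classical.not_imp]
        exact ⟨mem_Ioi.2 (lt_of_le_of_lt (le_max_right Q 0) (mem_Ioi.1 hx)), h x hx⟩
      simp at h0
    obtain ⟨q, hq, hqd⟩ := hex
    have hq0 : 0 < q := lt_of_le_of_lt (le_max_right _ _) hq
    have h1 := hQ q (le_trans (le_max_left _ _) (le_of_lt hq))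
    have h2 := aux_deriv_ge (fun p => Φ t p) (Real.exp (-(L + 1) * t)) q
      (hqd.differentiableAt (Ioi_mem_nhds hq0)) (by
        intro p hp
        obtain ⟨K, hK0, hK⟩ := hbound p (hq0.trans hp) t
        have := hDlow L q p t hq0 hp ht ⟨K, hK, fun w hw _ => hL w hw⟩
        linarith)
    linarith
  have hB : Tendsto (fun u => deriv Ψ u) atTop atTop → ∀ t : ℝ, 0 < t → b t = 0 := by
    intro hlim t ht
    have hnn : 0 ≤ b t := by
      refine ge_of_tendsto (hb t ht) ?_
      filter_upwards [eventually_gt_atTop 0] with q hq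
      by_cases hd : DifferentiableAt ℝ (fun p => Φ t p) q
      · refine aux_deriv_ge _ 0 q hd (fun p hp => ?_)
        have := hDpos q p t hq hp ht.le
        linarith
      · rw [deriv_zero_of_not_differentiableAt hd]
    by_contra hne
    have hbpos : 0 < b t := lt_of_le_of_ne hnn (Ne.symm hne)
    obtain ⟨Q, hQ⟩ := eventually_atTop.1
      ((hb t ht).eventually (lt_mem_nhds (show b t / 2 < b t by linarith)))
    have hdq : ∀ q, Q ≤ q → DifferentiableAt ℝ (fun p => Φ t p) q := by
      intro q hq
      by_contra hd
      have := hQ q hq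
      rw [deriv_zero_of_not_differentiableAt hd] at this
      linarith
    have hgrow : ∀ p q, Q ≤ p → p ≤ q → b t / 2 * (q - p) ≤ Φ t q - Φ t p := by
      intro p q hp hpq
      refine Convex.mul_sub_le_image_sub_of_le_deriv (f := fun p => Φ t p) (convex_Ici Q) ?_ ?_ ?_ p
        hp q (hp.trans hpq) hpq
      · exact fun x hx => (hdq x hx).continuousAt.continuousWithinAt
      · intro x hx
        exact (hdq x (interior_subset hx)).differentiableWithinAt
      · intro x hx
        exact (hQ x (interior_subset hx)).le
    -- choose M with exp (-M t) < b t / 2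
    obtain ⟨M, hM⟩ : ∃ M : ℝ, Real.exp (-M * t) < b t / 2 := by
      refine ⟨-(Real.log (b t / 2) - 1) / t, ?_⟩
      have : -(-(Real.log (b t / 2) - 1) / t) * t = Real.log (b t / 2) - 1 := by
        field_simp
        try ring
      rw [this]
      calc _ < Real.exp (Real.log (b t / 2)) := Real.exp_lt_exp.2 (by linarith)
        _ = _ := Real.exp_log (by linarith)
    obtain ⟨K₀, hK₀⟩ := eventually_atTop.1 (tendsto_atTop.1 hlim (max M 1))
    set K₁ := max K₀ 1 with hK₁
    have hK₁0 : 0 < K₁ := by positivity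
    have hK₁d : ∀ w, K₁ ≤ w → max M 1 ≤ deriv Ψ w := fun w hw =>
      hK₀ w ((le_max_left _ _).trans hw)
    set K := K₁ + |Ψ K₁| + 1 with hK
    have hKK : K₁ ≤ K := by have := abs_nonneg (Ψ K₁); linarith
    have hΨK : 0 < Ψ K := by
      have := hlow 1 K₁ K₁ K hK₁0 le_rfl hKK (fun w hw => (le_max_right _ _).trans (hK₁d w hw))
      have := neg_abs_le (Ψ K₁)
      linarith
    have hKd : ∀ w, K ≤ w → M ≤ deriv Ψ w := fun w hw =>
      (le_max_left _ _).trans (hK₁d w (hKK.trans hw))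
    have hK0 : 0 < K := hK₁0.trans_le hKK
    -- trapping
    have htrap : ∀ q, 0 < q → K < Φ t q → ∀ s, 0 < s → s ≤ t → K ≤ Φ s q := by
      intro q hq hqt s hs hst
      by_contra! hlt
      have := image_le_of_deriv_right_lt_deriv_boundary (f := fun r => Φ r q)
        (f' := fun r => -Ψ (Φ r q)) (a := s) (b := t) (B := fun _ => K) (B' := fun _ => 0)
        ((hΦcont q hq).mono (fun x hx => hs.le.trans hx.1))
        (fun x hx => (hΦode q hq x (hs.trans_le hx.1)).hasDerivWithinAt)
        hlt.le (fun x => hasDerivAt_const x K)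
        (fun x hx he => by
          rw [he]; linarith)
        (right_mem_Icc.2 hst)
      linarith
    set R := max Q 1 with hR
    have hR0 : 0 < R := by positivity
    set q := R + (K + 1) / (b t / 2) with hq
    have hRq : R ≤ q := by
      have : 0 ≤ (K + 1) / (b t / 2) := by positivity
      linarith
    have hq0 : 0 < q := hR0.trans_le hRq
    have hqK : K < Φ t q := by
      have h1 := hgrow R q (le_max_left _ _) hRq
      have h2 : b t / 2 * (q - R) = K + 1 := by rw [hq]; field_simp; try ring
      have := hΦpos R hR0 t ht.le
      linarith
    have hq1 : 0 < q + 1 := by linarith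
    have hlt1 := fun s (hs : 0 ≤ s) => hDpos q (q + 1) s hq0 (by linarith) hs
    have hfin := aux_upper (fun s => Φ s (q + 1) - Φ s q)
      (fun s => -Ψ (Φ s (q + 1)) - -Ψ (Φ s q)) M t ht
      (hDc q (q + 1) hq0 hq1) (hDd q (q + 1) hq0 hq1)
      (fun s hs hst => by
        have := hlow M K (Φ s q) (Φ s (q + 1)) hK0 (htrap q hq0 hqK s hs hst.le)
          (hlt1 s hs.le).le hKd
        linarith)
    simp only [hΦinit q hq0, hΦinit (q + 1) hq1] at hfin
    have h1 := hgrow q (q + 1) ((le_max_left _ _).trans hRq) (by linarith)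
    have e : q + 1 - q = 1 := by ring
    rw [e] at hfin h1
    linarith
  have hex : (∀ t : ℝ, 0 < t → b t = 0) → ∃ t : ℝ, 0 < t ∧ b t = 0 :=
    fun h => ⟨1, one_pos, h 1 one_pos⟩
  exact ⟨⟨fun h => hB (hA h), hex⟩, ⟨hA, fun h => hex (hB h)⟩⟩
end
end

section
/- Let Ψ(u) = αu + βu² + ∫_{(0,∞)} (e^{−ux} − 1 + ux) π(dx) be a branching mechanism and let Φ be the unique solution of ∂_t Φ(t,q) = −Ψ(Φ(t,q)), Φ(0,q) = q, for t > 0, q ∈ (0,∞). For t > 0 let Φ(t,∞) = lim_{q→∞} Φ(t,q) ∈ [0,∞] (the limit exists since q ↦ Φ(t,q) is nondecreasing). Then the following are equivalent: (a) Φ(t,∞) < ∞ for some t > 0; (b) Φ(t,∞) < ∞ for all t > 0; (c) Ψ satisfies Grey's condition, i.e. lim_{u→∞} Ψ(u) = ∞ and ∫_a^∞ du/Ψ(u) < ∞ for some a > 0. -/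
open MeasureTheory Set Filter

noncomputable section

lemma bm_kernel_bound (u x : ℝ) (hu : 0 ≤ u) (hx : 0 < x) :
    0 ≤ Real.exp (-(u * x)) - 1 + u * x ∧
    Real.exp (-(u * x)) - 1 + u * x ≤ (u + u ^ 2) * min x (x ^ 2) := by
  have hy : 0 ≤ u * x := by positivity
  have h1 := Real.add_one_le_exp (-(u * x))
  have h2 : Real.exp (-(u * x)) ≤ 1 := Real.exp_le_one_iff.2 (by linarith)
  have h3 : Real.exp (-(u * x)) - 1 + u * x ≤ (u * x) ^ 2 := by
    by_cases h : u * x ≤ 1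
    · have := Real.abs_exp_sub_one_sub_id_le (x := -(u * x)) (by rw [abs_neg, abs_of_nonneg hy]; exact h)
      have := (abs_le.1 this).2
      nlinarith
    · push Not at h
      nlinarith
  refine ⟨by linarith, ?_⟩
  rcases le_total x (x ^ 2) with h | h
  · rw [min_eq_left h]
    nlinarith [mul_nonneg (sq_nonneg u) hx.le]
  · rw [min_eq_right h]
    nlinarith [mul_nonneg hu (sq_nonneg x)]

lemma bm_integrable (π : Measure ℝ)
    (hπfin : ∫⁻ x in Ioi (0:ℝ), ENNReal.ofReal (min x (x ^ 2)) ∂π < ⊤) (u : ℝ) (hu : 0 ≤ u) :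
    IntegrableOn (fun x => Real.exp (-(u * x)) - 1 + u * x) (Ioi 0) π := by
  have h0 : IntegrableOn (fun x : ℝ => min x (x ^ 2)) (Ioi 0) π := by
    refine ⟨by fun_prop, ?_⟩
    rw [hasFiniteIntegral_iff_ofReal]
    · exact hπfin
    · filter_upwards [ae_restrict_mem measurableSet_Ioi] with x hx
      have hx' : 0 < x := hx
      simp only [Pi.zero_apply]
      positivity
  refine Integrable.mono' (h0.const_mul (u + u ^ 2)) (by fun_prop) ?_
  filter_upwards [ae_restrict_mem measurableSet_Ioi] with x hx
  have := bm_kernel_bound u x hu hx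
  rw [Real.norm_eq_abs, abs_of_nonneg this.1]
  exact this.2

lemma bm_convex (α β : ℝ) (π : Measure ℝ) (hβ : 0 ≤ β)
    (hπfin : ∫⁻ x in Ioi (0:ℝ), ENNReal.ofReal (min x (x ^ 2)) ∂π < ⊤) :
    ConvexOn ℝ (Ici 0) (fun u : ℝ => α * u + β * u ^ 2 +
      ∫ x in Ioi (0:ℝ), (Real.exp (-(u * x)) - 1 + u * x) ∂π) := by
  refine ⟨convex_Ici 0, ?_⟩
  intro u hu v hv a b ha hb hab
  have hu' : 0 ≤ u := hu
  have hv' : 0 ≤ v := hv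
  simp only [smul_eq_mul]
  have hI : ∫ x in Ioi (0:ℝ), (Real.exp (-((a * u + b * v) * x)) - 1 + (a * u + b * v) * x) ∂π
      ≤ a * (∫ x in Ioi (0:ℝ), (Real.exp (-(u * x)) - 1 + u * x) ∂π)
       + b * (∫ x in Ioi (0:ℝ), (Real.exp (-(v * x)) - 1 + v * x) ∂π) := by
    have iu := (bm_integrable π hπfin u hu').const_mul a
    have iv := (bm_integrable π hπfin v hv').const_mul b
    rw [← integral_const_mul, ← integral_const_mul, ← integral_add iu iv]
    refine integral_mono (bm_integrable π hπfin _ (by positivity)) (iu.add iv) ?_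
    intro x
    have := convexOn_exp.2 (mem_univ (-(u * x))) (mem_univ (-(v * x))) ha hb hab
    simp only [smul_eq_mul] at this
    have e : -((a * u + b * v) * x) = a * -(u * x) + b * -(v * x) := by ring
    simp only [Pi.add_apply]
    rw [e]
    nlinarith
  have hq : (a * u + b * v) ^ 2 ≤ a * u ^ 2 + b * v ^ 2 := by
    have hb' : b = 1 - a := by linarith
    subst hb'
    nlinarith [mul_nonneg (mul_nonneg ha hb) (sq_nonneg (u - v))]
  nlinarith [mul_le_mul_of_nonneg_left hq hβ]

lemma first_hit (f : ℝ → ℝ) (a t : ℝ) (ht : 0 ≤ t) (hf : ContinuousOn f (Icc 0 t))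
    (h0 : a < f 0) (h1 : f t ≤ a) :
    ∃ s, 0 < s ∧ s ≤ t ∧ f s = a ∧ ∀ r, 0 ≤ r → r < s → a < f r := by
  let S := Icc (0:ℝ) t ∩ f ⁻¹' (Iic a)
  have hS : IsClosed S := hf.preimage_isClosed_of_isClosed isClosed_Icc isClosed_Iic
  have hne : S.Nonempty := ⟨t, ⟨ht, le_rfl⟩, h1⟩
  have hbd : BddBelow S := ⟨0, fun x hx => hx.1.1⟩
  have hm := hS.csInf_mem hne hbd
  set s := sInf S
  have hlt : ∀ r, 0 ≤ r → r < s → a < f r := by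
    intro r hr hrs
    by_contra h
    push Not at h
    exact absurd (csInf_le hbd (show r ∈ S from ⟨⟨hr, hrs.le.trans hm.1.2⟩, h⟩)) (not_le.2 hrs)
  have hpos : 0 < s := by
    rcases hm.1.1.lt_or_eq with h | h
    · exact h
    · have h2 : f s ≤ a := hm.2
      rw [← h] at h2
      linarith
  refine ⟨s, hpos, hm.1.2, le_antisymm hm.2 ?_, hlt⟩
  have hc : ContinuousWithinAt f (Ico 0 s) s :=
    (hf s hm.1).mono (fun x hx => ⟨hx.1, hx.2.le.trans hm.1.2⟩)
  have : s ∈ closure (Ico 0 s) := by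
    rw [closure_Ico hpos.ne]; exact ⟨hpos.le, le_rfl⟩
  haveI := mem_closure_iff_nhdsWithin_neBot.1 this
  refine ge_of_tendsto hc ?_
  filter_upwards [self_mem_nhdsWithin] with r hr
  exact (hlt r hr.1 hr.2).le

lemma flow_time (Ψ f : ℝ → ℝ) (a s : ℝ) (hs : 0 ≤ s)
    (hc : ContinuousOn Ψ (Ici a)) (hp : ∀ u, a ≤ u → 0 < Ψ u)
    (hf : ContinuousOn f (Icc 0 s))
    (hd : ∀ r, 0 < r → r < s → HasDerivAt f (-Ψ (f r)) r)
    (hge : ∀ r, 0 ≤ r → r ≤ s → a ≤ f r) :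
    ∫ u in (f s)..(f 0), (Ψ u)⁻¹ = s := by
  have hcinv : ContinuousOn (fun u => (Ψ u)⁻¹) (Ici a) :=
    hc.inv₀ (fun u hu => (hp u hu).ne')
  have hmap : MapsTo f (Icc 0 s) (Ici a) := fun r hr => hge r hr.1 hr.2
  have hcomp : ContinuousOn (fun r => Ψ (f r)) (Icc 0 s) := hc.comp hf hmap
  have hcomp' : ContinuousOn (fun r => (Ψ (f r))⁻¹) (Icc 0 s) := hcinv.comp hf hmap
  have key := intervalIntegral.integral_comp_mul_deriv''' (a := 0) (b := s) (f := f)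
    (f' := fun r => -Ψ (f r)) (g := fun u => (Ψ u)⁻¹)
    (by rwa [uIcc_of_le hs])
    (by
      intro r hr
      rw [min_eq_left hs, max_eq_right hs] at hr
      exact (hd r hr.1 hr.2).hasDerivWithinAt)
    (by
      rw [min_eq_left hs, max_eq_right hs]
      exact hcinv.mono (by
        rintro _ ⟨r, hr, rfl⟩
        exact hge r hr.1.le hr.2.le))
    (by
      rw [uIcc_of_le hs]
      refine ContinuousOn.integrableOn_compact (isCompact_Icc.image_of_continuousOn hf) ?_
      exact hcinv.mono (by
        rintro _ ⟨r, hr, rfl⟩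
        exact hge r hr.1 hr.2))
    (by
      rw [uIcc_of_le hs]
      exact ContinuousOn.integrableOn_compact isCompact_Icc (hcomp'.mul hcomp.neg))
  rw [intervalIntegral.integral_symm, ← key]
  have : ∫ r in (0:ℝ)..s, ((fun u => (Ψ u)⁻¹) ∘ f) r * -Ψ (f r) = ∫ r in (0:ℝ)..s, (-1:ℝ) := by
    refine intervalIntegral.integral_congr ?_
    intro r hr
    rw [uIcc_of_le hs] at hr
    have := (hp _ (hge r hr.1 hr.2)).ne'
    simp only [Function.comp]
    field_simp
  rw [this]
  simp

/-- for the backward flow `Φ` of a branching mechanism `Ψ`,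
`Φ(t,∞) < ∞` (i.e. `q ↦ Φ(t,q)` is bounded above) for some `t > 0` iff for all
`t > 0`, iff `Ψ` satisfies Grey's condition. -/
theorem extinction_iff_Grey
    (Ψ : ℝ → ℝ) (α β : ℝ) (π : Measure ℝ)
    (hβ : 0 ≤ β)
    (hπfin : ∫⁻ x in Ioi (0:ℝ), ENNReal.ofReal (min x (x ^ 2)) ∂π < ⊤)
    (hΨ : ∀ u : ℝ, 0 < u →
      Ψ u = α * u + β * u ^ 2 + ∫ x in Ioi (0:ℝ), (Real.exp (-(u * x)) - 1 + u * x) ∂π)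
    (Φ : ℝ → ℝ → ℝ)
    (hΦcont : ∀ q : ℝ, 0 < q → ContinuousOn (fun t => Φ t q) (Ici 0))
    (hΦinit : ∀ q : ℝ, 0 < q → Φ 0 q = q)
    (hΦode : ∀ q : ℝ, 0 < q → ∀ t : ℝ, 0 < t →
      HasDerivAt (fun s => Φ s q) (-Ψ (Φ t q)) t) :
    ((∃ t : ℝ, 0 < t ∧ ∃ M : ℝ, ∀ q : ℝ, 0 < q → Φ t q ≤ M) ↔
      (∀ t : ℝ, 0 < t → ∃ M : ℝ, ∀ q : ℝ, 0 < q → Φ t q ≤ M)) ∧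
    ((∃ t : ℝ, 0 < t ∧ ∃ M : ℝ, ∀ q : ℝ, 0 < q → Φ t q ≤ M) ↔
      (Tendsto Ψ atTop atTop ∧
        ∃ a : ℝ, 0 < a ∧ IntegrableOn (fun u => (Ψ u)⁻¹) (Ioi a))) := by
  have hconv := bm_convex α β π hβ hπfin
  have hΨconv : ConvexOn ℝ (Ioi 0) Ψ :=
    (hconv.subset Ioi_subset_Ici_self (convex_Ioi 0)).congr (fun u hu => (hΨ u hu).symm)
  have hΨcont : ContinuousOn Ψ (Ioi 0) := hΨconv.continuousOn isOpen_Ioi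
  have hscale : ∀ u v : ℝ, 0 < u → u ≤ v → Ψ u ≤ (u / v) * Ψ v := by
    intro u v hu huv
    have hv : 0 < v := hu.trans_le huv
    have h := hconv.2 (show v ∈ Ici (0:ℝ) from hv.le) (show (0:ℝ) ∈ Ici (0:ℝ) from le_refl (0:ℝ))
      (show 0 ≤ u / v by positivity) (show 0 ≤ 1 - u / v by rw [sub_nonneg, div_le_one hv]; exact huv) (by ring)
    have e : (u / v) • v + (1 - u / v) • (0:ℝ) = u := by
      simp only [smul_eq_mul]; field_simp; ring
    rw [e] at h
    simp only [← hΨ u hu, ← hΨ v hv] at h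
    simpa using h
  have hca : (Tendsto Ψ atTop atTop ∧
        ∃ a : ℝ, 0 < a ∧ IntegrableOn (fun u => (Ψ u)⁻¹) (Ioi a)) →
      (∀ t : ℝ, 0 < t → ∃ M : ℝ, ∀ q : ℝ, 0 < q → Φ t q ≤ M) := by
    rintro ⟨hT, a, ha, hint⟩ t ht
    obtain ⟨A₀, hA₀⟩ := eventually_atTop.1 (hT.eventually_gt_atTop 0)
    set A := max a A₀ with hA
    have hAa : a ≤ A := le_max_left _ _
    have hA0 : 0 < A := ha.trans_le hAa
    have hpos : ∀ u, A ≤ u → 0 < Ψ u := fun u hu => hA₀ u ((le_max_right _ _).trans hu)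
    have hintA : IntegrableOn (fun u => (Ψ u)⁻¹) (Ioi A) := hint.mono_set (Ioi_subset_Ioi hAa)
    have hii : ∀ x y, A ≤ x → A ≤ y → IntervalIntegrable (fun u => (Ψ u)⁻¹) volume x y := by
      intro x y hx hy
      refine ContinuousOn.intervalIntegrable ?_
      have hsub : uIcc x y ⊆ Ici A := fun z hz => (le_min hx hy).trans hz.1
      exact (hΨcont.mono (fun z hz => hA0.trans_le (hsub hz))).inv₀
        (fun z hz => (hpos z (hsub hz)).ne')
    have hlim := intervalIntegral_tendsto_integral_Ioi A hintA tendsto_id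
    obtain ⟨M, hM, hAM⟩ := ((hlim.eventually_const_lt
      (show (∫ u in Ioi A, (Ψ u)⁻¹) - t < ∫ u in Ioi A, (Ψ u)⁻¹ by linarith)).and
      (eventually_ge_atTop A)).exists
    simp only [id] at hM
    refine ⟨M, fun q hq => ?_⟩
    by_contra hlt
    push Not at hlt
    have hcont : ContinuousOn (fun s => Φ s q) (Icc 0 t) :=
      (hΦcont q hq).mono Icc_subset_Ici_self
    -- the path stays above `M`
    have habove : ∀ s, 0 ≤ s → s ≤ t → M ≤ Φ s q := by
      intro s hs hst
      by_contra hsM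
      push Not at hsM
      obtain ⟨r, hr0, hrt, hrM, hr⟩ := first_hit (fun r => Φ (t - r) q) M (t - s) (by linarith)
        (hcont.comp (by fun_prop) (fun r hr => ⟨by linarith [hr.2], by linarith [hr.1]⟩))
        (by simpa using hlt) (by simpa using hsM.le)
      have hanti : AntitoneOn (fun s => Φ s q) (Icc (t - r) t) := by
        refine antitoneOn_of_deriv_nonpos (convex_Icc _ _)
          (hcont.mono (Icc_subset_Icc (by linarith) le_rfl)) ?_ ?_
        · intro x hx
          rw [interior_Icc] at hx
          exact (hΦode q hq x (by linarith [hx.1])).differentiableAt.differentiableWithinAt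
        · intro x hx
          rw [interior_Icc] at hx
          rw [(hΦode q hq x (by linarith [hx.1])).deriv]
          have := hr (t - x) (by linarith [hx.2]) (by linarith [hx.1])
          rw [sub_sub_cancel] at this
          linarith [hpos (Φ x q) (by linarith)]
      have := hanti (show t - r ∈ Icc (t - r) t from ⟨le_rfl, by linarith⟩)
        (show t ∈ Icc (t - r) t from ⟨by linarith, le_rfl⟩) (by linarith)
      simp only at this
      linarith
    have hft := flow_time Ψ (fun s => Φ s q) M t ht.le
      (hΨcont.mono (fun z hz => (hA0.trans_le hAM).trans_le hz))
      (fun u hu => hpos u (hAM.trans hu)) hcont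
      (fun r hr _ => hΦode q hq r hr) habove
    simp only [hΦinit q hq] at hft
    have hMq : M ≤ q := by
      have := habove 0 le_rfl ht.le
      rwa [hΦinit q hq] at this
    have e1 := intervalIntegral.integral_add_adjacent_intervals
      (hii A M le_rfl hAM) (hii M (Φ t q) hAM (by linarith))
    have e2 := intervalIntegral.integral_add_adjacent_intervals
      (hii A (Φ t q) le_rfl (by linarith)) (hii (Φ t q) q (by linarith) (by linarith))
    have e3 : 0 ≤ ∫ u in M..(Φ t q), (Ψ u)⁻¹ :=
      intervalIntegral.integral_nonneg hlt.le
        (fun u hu => (inv_pos.2 (hpos u (hAM.trans hu.1))).le)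
    have e4 : ∫ u in A..q, (Ψ u)⁻¹ ≤ ∫ u in Ioi A, (Ψ u)⁻¹ := by
      rw [intervalIntegral.integral_of_le (hAM.trans hMq)]
      refine setIntegral_mono_set hintA ?_ (Ioc_subset_Ioi_self.eventuallyLE)
      filter_upwards [ae_restrict_mem measurableSet_Ioi] with u hu
      exact (inv_pos.2 (hpos u (le_of_lt hu))).le
    linarith
  have hac : (∃ t : ℝ, 0 < t ∧ ∃ M : ℝ, ∀ q : ℝ, 0 < q → Φ t q ≤ M) →
      (Tendsto Ψ atTop atTop ∧
        ∃ a : ℝ, 0 < a ∧ IntegrableOn (fun u => (Ψ u)⁻¹) (Ioi a)) := by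
    rintro ⟨t, ht, M, hM⟩
    have hex : ∃ u₀, 0 < u₀ ∧ 0 < Ψ u₀ := by
      by_contra hno
      push Not at hno
      -- take `q` large
      set q := max M 0 + 2 with hqdef
      have hq : 0 < q := by have := le_max_right M 0; linarith
      have hcont : ContinuousOn (fun s => Φ s q) (Icc 0 t) :=
        (hΦcont q hq).mono Icc_subset_Ici_self
      obtain ⟨r, hr0, hrt, hrM, hr⟩ := first_hit (fun r => Φ r q) (max M 0 + 1) t ht.le hcont
        (by simp only [hΦinit q hq]; linarith)
        ((hM q hq).trans (by linarith [le_max_left M 0]))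
      have hmono : MonotoneOn (fun s => Φ s q) (Icc 0 r) := by
        refine monotoneOn_of_deriv_nonneg (convex_Icc _ _)
          (hcont.mono (Icc_subset_Icc le_rfl hrt)) ?_ ?_
        · intro x hx
          rw [interior_Icc] at hx
          exact (hΦode q hq x hx.1).differentiableAt.differentiableWithinAt
        · intro x hx
          rw [interior_Icc] at hx
          rw [(hΦode q hq x hx.1).deriv]
          have h1 := hr x hx.1.le hx.2
          linarith [hno (Φ x q) (by linarith [le_max_right M 0])]
      have := hmono (show (0:ℝ) ∈ Icc 0 r from ⟨le_rfl, hr0.le⟩)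
        (show r ∈ Icc 0 r from ⟨hr0.le, le_rfl⟩) hr0.le
      simp only [hΦinit q hq] at this hrM
      linarith
    obtain ⟨u₀, hu₀, hΨu₀⟩ := hex
    have hlow : ∀ u, u₀ ≤ u → (Ψ u₀ / u₀) * u ≤ Ψ u := by
      intro u hu
      have hu' : 0 < u := hu₀.trans_le hu
      have h := hscale u₀ u hu₀ hu
      rw [div_mul_eq_mul_div, le_div_iff₀ hu'] at h
      rw [div_mul_eq_mul_div, div_le_iff₀ hu₀]
      linarith
    have hpos : ∀ u, u₀ ≤ u → 0 < Ψ u := fun u hu =>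
      lt_of_lt_of_le (mul_pos (div_pos hΨu₀ hu₀) (hu₀.trans_le hu)) (hlow u hu)
    refine ⟨?_, max u₀ M, lt_max_of_lt_left hu₀, ?_⟩
    · refine tendsto_atTop_mono' atTop ?_
        (tendsto_id.const_mul_atTop (div_pos hΨu₀ hu₀))
      filter_upwards [eventually_ge_atTop u₀] with u hu
      exact hlow u hu
    · set a := max u₀ M with hadef
      have hua : u₀ ≤ a := le_max_left _ _
      have hca' : ContinuousOn Ψ (Ici a) :=
        hΨcont.mono (fun z hz => (hu₀.trans_le hua).trans_le hz)
      have hcinv : ContinuousOn (fun u => (Ψ u)⁻¹) (Ici a) :=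
        hca'.inv₀ (fun u hu => (hpos u (hua.trans hu)).ne')
      refine integrableOn_Ioi_of_intervalIntegral_norm_bounded (l := atTop) (b := id) t a ?_
        tendsto_id ?_
      · intro i
        exact ((hcinv.mono Icc_subset_Ici_self).integrableOn_compact isCompact_Icc).mono_set
          Ioc_subset_Icc_self
      · filter_upwards [eventually_gt_atTop a] with q hqa
        have hq : 0 < q := (hu₀.trans_le hua).trans hqa
        have hcont : ContinuousOn (fun s => Φ s q) (Icc 0 t) :=
          (hΦcont q hq).mono Icc_subset_Ici_self
        obtain ⟨r, hr0, hrt, hrM, hr⟩ := first_hit (fun r => Φ r q) a t ht.le hcont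
          (by simpa only [hΦinit q hq] using hqa)
          ((hM q hq).trans (le_max_right _ _))
        have hft := flow_time Ψ (fun s => Φ s q) a r hr0.le hca'
          (fun u hu => hpos u (hua.trans hu)) (hcont.mono (Icc_subset_Icc le_rfl hrt))
          (fun r hr _ => hΦode q hq r hr) (by
            intro x hx hxr
            rcases hxr.lt_or_eq with h | h
            · exact (hr x hx h).le
            · rw [h]; exact hrM.ge)
        simp only [hΦinit q hq] at hft hrM
        rw [hrM] at hft
        simp only [id]
        have : ∫ u in a..q, ‖(Ψ u)⁻¹‖ = ∫ u in a..q, (Ψ u)⁻¹ := by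
          refine intervalIntegral.integral_congr ?_
          intro u hu
          rw [uIcc_of_le hqa.le] at hu
          exact Real.norm_of_nonneg (inv_pos.2 (hpos u (hua.trans hu.1))).le
        rw [this, hft]
        exact hrt
  exact ⟨⟨fun h => hca (hac h), fun h => ⟨1, one_pos, h 1 one_pos⟩⟩,
    ⟨hac, fun h => ⟨1, one_pos, hca h 1 one_pos⟩⟩⟩
end
end
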